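/- arXiv:2509.25809 — 2 statements merged into one kernel-verified Lean document; each statement's English description precedes it below -/
import Mathlib

section
/- A 4-connected graph G is contraction critical (i.e., no edge contraction of G yields a 4-connected graph) if and only if G is 4-regular and every edge of G lies in a triangle. -/
/-!
Call an edge `pq` good if its ends have a common neighbour of degree four, and bad otherwise.

Contracting a good edge leaves that common neighbour with degree three, so it destroys
4-connectivity (`not_isKConnected_contractE`); this settles one direction. Conversely, if the
contraction of a bad edge is not 4-connected, then its ends lie in a common 4-cut (`exists_cut`),
both sides of which have at least two vertices (`Cut.two_le`). The core is that in a contraction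
critical graph there are no bad edges (`good_of_adj`).

Suppose there are bad edges, and choose a 4-cut `T` containing a bad edge `xy`, with sides `A`
and `C`, such that `A` is as small as possible over all such cuts and bad edges. Crossing `T` with
a 4-cut through another bad edge and counting the corners gives two facts.
* Every edge meeting `A` is good (`MinCut.good`).
* If `t ∈ T` has a unique neighbour `u` in `C`, then `tu` is good (`MinCut.good_of_unique`).

By the second fact, a vertex of `T` of degree four with a unique neighbour in `C` has a partner in
`T`, joined to it by a good edge, and neither of the two has any further neighbour in `T`
(`MinCut.partner`). Hence `x` cannot have degree four with a unique neighbour in `C`. It follows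
that `x` is adjacent to two adjacent vertices `w`, `w'` of `A`, both of degree four. If `x` had
degree at least five, the good edges around `w` and `w'` would force two or three vertices enclosed
by only three others (`card_nb_of_triangle`); so `x` has degree four, its neighbours are
`w`, `w'`, `y` and a single vertex of `C`, which is excluded (`MinCut.false`).

Once every edge is good, `card_nb_of_triangle` applies at every vertex, so the graph is 4-regular.
-/

open SimpleGraph Set

variable {V : Type*}

/-- `G` is `k`-connected: more than `k` vertices and removing fewer than `k`
vertices leaves a connected graph. -/
def IsKConnected (k : ℕ) [Fintype V] (G : SimpleGraph V) : Prop :=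
  k + 1 ≤ Fintype.card V ∧
    ∀ S : Set V, S.ncard < k → (G.induce Sᶜ).Connected

/-- Contraction of the edge `xy`: identify `y` with `x`, simplifying multiple edges. -/
def contractE [DecidableEq V] (G : SimpleGraph V) (x y : V) :
    SimpleGraph {v : V // v ≠ y} :=
  SimpleGraph.fromRel (fun a b =>
    G.Adj a.1 b.1 ∨ (a.1 = x ∧ G.Adj y b.1) ∨ (b.1 = x ∧ G.Adj y a.1))

/-- The (outer) neighborhood of a vertex set `A`. -/
def gBoundary (G : SimpleGraph V) (A : Set V) : Set V :=
  {v | v ∉ A ∧ ∃ a ∈ A, G.Adj v a}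

/-- `S` separates `G`: the rest of the graph splits into two nonempty parts
with no edges between them. -/
def Separates (G : SimpleGraph V) (S : Set V) : Prop :=
  ∃ A B : Set V, A.Nonempty ∧ B.Nonempty ∧ Disjoint A B ∧ A ∪ B = Sᶜ ∧
    ∀ a ∈ A, ∀ b ∈ B, ¬ G.Adj a b

/-- `T` is a nontrivial 4-cut: `|T| = 4` and `G - T` splits into two parts,
each of size at least 2, with no edges between them. -/
def IsNontrivialFourCut (G : SimpleGraph V) (T : Set V) : Prop :=
  T.ncard = 4 ∧ ∃ A B : Set V, 2 ≤ A.ncard ∧ 2 ≤ B.ncard ∧ Disjoint A B ∧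
    A ∪ B = Tᶜ ∧ ∀ a ∈ A, ∀ b ∈ B, ¬ G.Adj a b

/-- `G` is quasi 5-connected: 4-connected without a nontrivial 4-cut. -/
def QuasiFiveConnected [Fintype V] (G : SimpleGraph V) : Prop :=
  IsKConnected 4 G ∧ ∀ T : Set V, ¬ IsNontrivialFourCut G T

/-- `G` is contraction critical quasi 5-connected. -/
def ContractionCriticalQuasiFive [Fintype V] [DecidableEq V] (G : SimpleGraph V) : Prop :=
  QuasiFiveConnected G ∧
    ∀ x y : V, G.Adj x y → ¬ QuasiFiveConnected (contractE G x y)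

/-- `A` is a fragment of `G`: both `A` and its "far side" are nonempty and the
neighborhood of `A` is a smallest separating set. -/
def IsFragment (G : SimpleGraph V) (A : Set V) : Prop :=
  A.Nonempty ∧ (Aᶜ \ gBoundary G A).Nonempty ∧
    ∀ S : Set V, Separates G S → (gBoundary G A).ncard ≤ S.ncard

/-- A nontrivial fragment: both sides have at least two vertices. -/
def IsNontrivialFragment (G : SimpleGraph V) (A : Set V) : Prop :=
  IsFragment G A ∧ 2 ≤ A.ncard ∧ 2 ≤ (Aᶜ \ gBoundary G A).ncard

/-- Degree sum at least 9 for every pair of vertices at distance one or two. -/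
def DegSumNine (G : SimpleGraph V) : Prop :=
  ∀ u v : V, (G.dist u v = 1 ∨ G.dist u v = 2) →
    9 ≤ (G.neighborSet u).ncard + (G.neighborSet v).ncard

/-! ### Separations and connectivity -/

/-- The neighbourhood of `v` as a finset. -/
noncomputable def nb [Fintype V] (G : SimpleGraph V) (v : V) : Finset V := by
  classical exact Finset.univ.filter (G.Adj v)

/-- `A`, `T`, `C` partition the vertex set and no edge joins `A` to `C`
(either of `A`, `C` may be empty). -/
structure IsSep (G : SimpleGraph V) (A T C : Finset V) : Prop where
  at_ : ∀ v ∈ A, v ∉ T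
  ac : ∀ v ∈ A, v ∉ C
  tc : ∀ v ∈ T, v ∉ C
  cover : ∀ v, v ∈ A ∨ v ∈ T ∨ v ∈ C
  nadj : ∀ a ∈ A, ∀ c ∈ C, ¬ G.Adj a c

/-- `p` and `q` have a common neighbour of degree four. -/
def Good [Fintype V] (G : SimpleGraph V) (p q : V) : Prop :=
  ∃ w, (nb G w).card = 4 ∧ G.Adj w p ∧ G.Adj w q

/-- `pq` is an edge whose ends have no common neighbour of degree four. -/
def Bad [Fintype V] (G : SimpleGraph V) (p q : V) : Prop :=
  G.Adj p q ∧ ¬ Good G p q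

/-- `T` is a four-vertex cut containing `p` and `q`, with sides `A` and `C`. -/
structure Cut (G : SimpleGraph V) (A T C : Finset V) (p q : V) : Prop where
  sep : IsSep G A T C
  neA : A.Nonempty
  neC : C.Nonempty
  card : T.card = 4
  memp : p ∈ T
  memq : q ∈ T

section Basic

variable {G : SimpleGraph V}

@[simp] lemma mem_nb [Fintype V] {v w : V} : w ∈ nb G v ↔ G.Adj v w := by
  simp [nb]

lemma ncard_nb [Fintype V] (v : V) : (G.neighborSet v).ncard = (nb G v).card := by
  rw [← Set.ncard_coe_finset]
  congr 1
  ext w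
  simp

lemma IsSep.symm {A T C : Finset V} (h : IsSep G A T C) : IsSep G C T A where
  at_ v hv ht := h.tc v ht hv
  ac v hv ha := h.ac v ha hv
  tc v hv ha := h.at_ v ha hv
  cover v := by have := h.cover v; tauto
  nadj a ha c hc e := h.nadj c hc a ha e.symm

lemma Good.symm [Fintype V] {p q : V} (h : Good G p q) : Good G q p := by
  obtain ⟨w, h1, h2, h3⟩ := h
  exact ⟨w, h1, h3, h2⟩

lemma Bad.symm [Fintype V] {p q : V} (h : Bad G p q) : Bad G q p :=
  ⟨h.1.symm, fun g => h.2 g.symm⟩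

lemma Cut.symm {A T C : Finset V} {p q : V} (h : Cut G A T C p q) : Cut G C T A p q :=
  ⟨h.sep.symm, h.neC, h.neA, h.card, h.memp, h.memq⟩

/-- Two vertices outside a separator that are joined by a walk lie on the same side. -/
lemma IsSep.mem_of_reachable {A T C : Finset V} (h : IsSep G A T C)
    {u v : ((T : Set V)ᶜ : Set V)} (hr : (G.induce ((T : Set V)ᶜ)).Reachable u v)
    (hu : u.1 ∈ A) : v.1 ∈ A := by
  obtain ⟨p⟩ := hr
  induction p with
  | nil => exact hu
  | @cons a b c e p ih =>
    apply ih
    have e' : G.Adj a.1 b.1 := e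
    rcases h.cover b.1 with hb | hb | hb
    · exact hb
    · exact absurd hb b.2
    · exact absurd e' (h.nadj _ hu _ hb)

lemma IsSep.le_card [Fintype V] {k : ℕ} (hk : IsKConnected k G) {A T C : Finset V} (h : IsSep G A T C)
    (hA : A.Nonempty) (hC : C.Nonempty) : k ≤ T.card := by
  by_contra hlt
  push Not at hlt
  have hc := hk.2 (T : Set V) (by rwa [Set.ncard_coe_finset])
  obtain ⟨a, ha⟩ := hA
  obtain ⟨c, hc'⟩ := hC
  have hr := hc.preconnected ⟨a, by simpa using h.at_ a ha⟩
    ⟨c, by simpa using fun hT => h.tc c hT hc'⟩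
  exact h.ac c (h.mem_of_reachable hr ha) hc'

lemma exists_sep_of_not_isKConnected [Fintype V] {k : ℕ} (hcard : k + 1 ≤ Fintype.card V)
    (hk : ¬ IsKConnected k G) :
    ∃ A T C : Finset V, IsSep G A T C ∧ A.Nonempty ∧ C.Nonempty ∧ T.card < k := by
  classical
  simp only [IsKConnected, hcard, true_and, not_forall] at hk
  obtain ⟨S, hS, hc⟩ := hk
  have hne : (Sᶜ).Nonempty := by
    rw [Set.nonempty_iff_ne_empty]
    intro h
    have : S = Set.univ := by simpa using h
    subst this
    rw [Set.ncard_univ, Nat.card_eq_fintype_card] at hS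
    omega
  have : Nonempty (Sᶜ : Set V) := hne.to_subtype
  have hp : ¬ (G.induce Sᶜ).Preconnected := fun h => hc ⟨h⟩
  simp only [SimpleGraph.Preconnected, not_forall] at hp
  obtain ⟨u, v, huv⟩ := hp
  refine ⟨Finset.univ.filter fun w => ∃ h : w ∈ Sᶜ, (G.induce Sᶜ).Reachable u ⟨w, h⟩,
    S.toFinset,
    Finset.univ.filter fun w => ∃ h : w ∈ Sᶜ, ¬ (G.induce Sᶜ).Reachable u ⟨w, h⟩,
    ⟨?_, ?_, ?_, ?_, ?_⟩, ⟨u, ?_⟩, ⟨v, ?_⟩, ?_⟩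
  · simp only [Finset.mem_filter, Finset.mem_univ, true_and, Set.mem_toFinset]
    rintro w ⟨h, -⟩
    exact h
  · simp only [Finset.mem_filter, Finset.mem_univ, true_and]
    rintro w ⟨_, h1⟩ ⟨_, h2⟩
    exact h2 h1
  · simp only [Finset.mem_filter, Finset.mem_univ, true_and, Set.mem_toFinset]
    rintro w h ⟨h', -⟩
    exact h' h
  · intro w
    simp only [Finset.mem_filter, Finset.mem_univ, true_and, Set.mem_toFinset]
    by_cases hw : w ∈ S
    · exact Or.inr (Or.inl hw)
    · by_cases hr : (G.induce Sᶜ).Reachable u ⟨w, hw⟩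
      · exact Or.inl ⟨hw, hr⟩
      · exact Or.inr (Or.inr ⟨hw, hr⟩)
  · simp only [Finset.mem_filter, Finset.mem_univ, true_and]
    rintro a ⟨ha, hra⟩ c ⟨hc', hrc⟩ e
    apply hrc
    refine hra.trans (SimpleGraph.Adj.reachable ?_)
    exact e
  · exact Finset.mem_filter.2 ⟨Finset.mem_univ _, u.2, .refl _⟩
  · simpa using ⟨v.2, huv⟩
  · rwa [← Set.ncard_eq_toFinset_card']

end Basic

/-! ### Crossing separations -/

section Crossing

variable [DecidableEq V] {G : SimpleGraph V}

lemma IsSep.card_split {B S D : Finset V} (h : IsSep G B S D) (X : Finset V) :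
    X.card = (X ∩ B).card + (X ∩ S).card + (X ∩ D).card := by
  have : X = ((X ∩ B) ∪ (X ∩ S)) ∪ (X ∩ D) := by
    ext v
    have := h.cover v
    simp only [Finset.mem_union, Finset.mem_inter]
    tauto
  conv_lhs => rw [this]
  rw [Finset.card_union_of_disjoint, Finset.card_union_of_disjoint]
  · rw [Finset.disjoint_left]
    simp only [Finset.mem_inter]
    rintro v ⟨-, h1⟩ ⟨-, h2⟩
    exact h.at_ v h1 h2
  · rw [Finset.disjoint_left]
    simp only [Finset.mem_inter, Finset.mem_union]
    rintro v (⟨-, h1⟩ | ⟨-, h1⟩) ⟨-, h2⟩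
    · exact h.ac v h1 h2
    · exact h.tc v h1 h2

lemma IsSep.card_split_left {B S D : Finset V} (h : IsSep G B S D) (X : Finset V) :
    X.card = (B ∩ X).card + (S ∩ X).card + (D ∩ X).card := by
  rw [Finset.inter_comm B, Finset.inter_comm S, Finset.inter_comm D]
  exact h.card_split X

lemma one_le_inter {X Y : Finset V} {v : V} (h1 : v ∈ X) (h2 : v ∈ Y) : 1 ≤ (X ∩ Y).card :=
  Finset.card_pos.2 ⟨v, Finset.mem_inter.2 ⟨h1, h2⟩⟩

/-- The corner `A ∩ B` of two crossing separations is itself separated. -/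
lemma IsSep.corner {A T C B S D : Finset V} (h : IsSep G A T C) (h' : IsSep G B S D) :
    IsSep G (A ∩ B) ((T ∩ S) ∪ (T ∩ B) ∪ (A ∩ S)) (C ∪ D) := by
  have c1 := h.cover
  have c2 := h'.cover
  have a1 := h.at_
  have a2 := h'.at_
  have b1 := h.ac
  have b2 := h'.ac
  have d1 := h.tc
  have d2 := h'.tc
  refine ⟨?_, ?_, ?_, ?_, ?_⟩
  · intro v; simp only [Finset.mem_union, Finset.mem_inter]; grind
  · intro v; simp only [Finset.mem_union, Finset.mem_inter]; grind
  · intro v; simp only [Finset.mem_union, Finset.mem_inter]; grind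
  · intro v; simp only [Finset.mem_union, Finset.mem_inter]; grind
  · intro a ha c hc
    simp only [Finset.mem_union, Finset.mem_inter] at ha hc
    rcases hc with hc | hc
    · exact h.nadj _ ha.1 _ hc
    · exact h'.nadj _ ha.2 _ hc

lemma corner_card_le (A T B S : Finset V) : ((T ∩ S) ∪ (T ∩ B) ∪ (A ∩ S)).card ≤
    (T ∩ S).card + (T ∩ B).card + (A ∩ S).card := by
  have h1 := Finset.card_union_le ((T ∩ S) ∪ (T ∩ B)) (A ∩ S)
  have h2 := Finset.card_union_le (T ∩ S) (T ∩ B)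
  omega

lemma IsSep.le_corner [Fintype V] (hk : IsKConnected 4 G) {A T C B S D : Finset V} (h : IsSep G A T C)
    (h' : IsSep G B S D) (hne : 0 < (A ∩ B).card) (hC : C.Nonempty) :
    4 ≤ (T ∩ S).card + (T ∩ B).card + (A ∩ S).card :=
  ((h.corner h').le_card hk (Finset.card_pos.1 hne)
    (hC.mono Finset.subset_union_left)).trans (corner_card_le A T B S)

/-- A separator vertex without neighbours in `A` can be moved to the other side. -/
lemma IsSep.drop {A T C : Finset V} (h : IsSep G A T C) {t : V} (ht : t ∈ T)
    (hn : ∀ a ∈ A, ¬ G.Adj t a) : IsSep G A (T.erase t) (insert t C) := by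
  have a1 := h.at_
  have b1 := h.ac
  have c1 := h.cover
  have d1 := h.tc
  refine ⟨by grind, by grind, by grind, by grind, ?_⟩
  intro a ha c hc e
  rcases Finset.mem_insert.1 hc with rfl | hc
  · exact hn a ha e.symm
  · exact h.nadj a ha c hc e

lemma IsSep.five_le [Fintype V] (hk : IsKConnected 4 G) {A T C : Finset V} (h : IsSep G A T C)
    (hA : A.Nonempty) {t : V} (ht : t ∈ T) (hn : ∀ a ∈ A, ¬ G.Adj t a) : 5 ≤ T.card := by
  have := (h.drop ht hn).le_card hk hA ⟨t, by simp⟩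
  rw [Finset.card_erase_of_mem ht] at this
  omega

lemma IsSep.exists_adj [Fintype V] (hk : IsKConnected 4 G) {A T C : Finset V} (h : IsSep G A T C)
    (hA : A.Nonempty) (hT : T.card = 4) {t : V} (ht : t ∈ T) : ∃ a ∈ A, G.Adj t a := by
  by_contra hn
  push Not at hn
  have := h.five_le hk hA ht hn
  omega

/-- Two vertices of a 4-separator do not share their only neighbour on a side with at
least two vertices: exchanging both for that neighbour would give a 3-separator. -/
lemma IsSep.no_shared [Fintype V] (hk : IsKConnected 4 G) {A T C : Finset V} (h : IsSep G A T C)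
    (hA : 2 ≤ A.card) (hT : T.card = 4) {t t' u : V} (ht : t ∈ T) (ht' : t' ∈ T)
    (hne : t ≠ t') (hu : u ∈ A) (h1 : ∀ a ∈ A, G.Adj t a → a = u)
    (h2 : ∀ a ∈ A, G.Adj t' a → a = u) : False := by
  have huT := h.at_ u hu
  have hs : IsSep G (A.erase u) (insert u T) C := by
    have a1 := h.at_
    have b1 := h.ac
    have c1 := h.cover
    have d1 := h.tc
    refine ⟨by grind, by grind, by grind, by grind, ?_⟩
    intro a ha c hc
    exact h.nadj a (Finset.mem_of_mem_erase ha) c hc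
  have hs2 := hs.drop (t := t) (by simp [ht])
    (fun a ha e => (Finset.mem_erase.1 ha).1 (h1 a (Finset.mem_erase.1 ha).2 e))
  have h5 := hs2.five_le hk (t := t')
    (Finset.card_pos.1 (by rw [Finset.card_erase_of_mem hu]; omega))
    (by simp [ht', hne.symm])
    (fun a ha e => (Finset.mem_erase.1 ha).1 (h2 a (Finset.mem_erase.1 ha).2 e))
  rw [Finset.card_erase_of_mem (by simp [ht]), Finset.card_insert_of_notMem huT] at h5
  omega

lemma le_card_nb [Fintype V] (hk : IsKConnected 4 G) (v : V) : 4 ≤ (nb G v).card := by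
  have hs : IsSep G {v} (nb G v) (Finset.univ \ insert v (nb G v)) := by
    refine ⟨?_, ?_, ?_, ?_, ?_⟩
    · simp
    · simp
    · intro w; simp; tauto
    · intro w; simp; tauto
    · intro a ha c hc; simp at ha hc; subst ha; tauto
  rcases Finset.eq_empty_or_nonempty (Finset.univ \ insert v (nb G v)) with h | h
  · have h1 : insert v (nb G v) = Finset.univ := by
      simpa [Finset.sdiff_eq_empty_iff_subset, Finset.univ_subset_iff] using h
    have h2 := Finset.card_insert_le v (nb G v)
    rw [h1, Finset.card_univ] at h2
    have := hk.1
    omega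
  · exact hs.le_card hk (by simp) h

/-- Each side of a 4-cut through a bad edge has at least two vertices, since a single vertex
would be a common neighbour of degree four. -/
lemma Cut.two_le [Fintype V] (hk : IsKConnected 4 G) {A T C : Finset V} {p q : V} (h : Cut G A T C p q)
    (hb : Bad G p q) : 2 ≤ A.card := by
  by_contra hlt
  have h1 : A.card = 1 := by have := Finset.card_pos.2 h.neA; omega
  obtain ⟨a, rfl⟩ := Finset.card_eq_one.1 h1
  have hsub : nb G a ⊆ T := by
    intro w hw
    rw [mem_nb] at hw
    rcases h.sep.cover w with hA | hT | hC
    · rw [Finset.mem_singleton] at hA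
      exact absurd hw (hA ▸ G.irrefl)
    · exact hT
    · exact absurd hw (h.sep.nadj a (by simp) w hC)
  have heq : nb G a = T := Finset.eq_of_subset_of_card_le hsub (by
    rw [h.card]; exact le_card_nb hk a)
  apply hb.2
  refine ⟨a, by rw [heq, h.card], ?_, ?_⟩
  · rw [← mem_nb, heq]; exact h.memp
  · rw [← mem_nb, heq]; exact h.memq

end Crossing

/-! ### Vertices of degree four -/

section Local

variable [Fintype V] [DecidableEq V] {G : SimpleGraph V}

lemma four_nb {w p q r : V} (hw : (nb G w).card = 4) (hp : G.Adj w p) (hq : G.Adj w q)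
    (hr : G.Adj w r) (h1 : p ≠ q) (h2 : p ≠ r) (h3 : q ≠ r) :
    ∃ s, s ≠ p ∧ s ≠ q ∧ s ≠ r ∧ G.Adj w s ∧
      ∀ v, G.Adj w v → v = p ∨ v = q ∨ v = r ∨ v = s := by
  have hsub : ({p, q, r} : Finset V) ⊆ nb G w := by
    intro v hv
    simp only [Finset.mem_insert, Finset.mem_singleton] at hv
    rw [mem_nb]
    rcases hv with rfl | rfl | rfl <;> assumption
  have h3c : ({p, q, r} : Finset V).card = 3 := Finset.card_eq_three.2 ⟨p, q, r, h1, h2, h3, rfl⟩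
  have hc := Finset.card_sdiff_of_subset hsub
  rw [hw, h3c] at hc
  obtain ⟨s, hs⟩ := Finset.card_eq_one.1 hc
  have hm : ∀ v, (G.Adj w v ∧ ¬ (v = p ∨ v = q ∨ v = r)) ↔ v = s := by
    intro v
    have := Finset.ext_iff.1 hs v
    simpa using this
  refine ⟨s, ?_⟩
  have hs' := (hm s).2 rfl
  refine ⟨by tauto, by tauto, by tauto, hs'.1, fun v hv => ?_⟩
  have := (hm v).1
  tauto

lemma four_nb_all {w p q r s : V} (hw : (nb G w).card = 4) (hp : G.Adj w p) (hq : G.Adj w q)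
    (hr : G.Adj w r) (hs : G.Adj w s) (h1 : p ≠ q) (h2 : p ≠ r) (h3 : p ≠ s) (h4 : q ≠ r)
    (h5 : q ≠ s) (h6 : r ≠ s) : ∀ v, G.Adj w v → v = p ∨ v = q ∨ v = r ∨ v = s := by
  obtain ⟨s', -, -, -, -, h⟩ := four_nb hw hp hq hr h1 h2 h4
  have := h s hs
  intro v hv
  have := h v hv
  grind

/-- In a 4-connected graph, at most three vertices cannot enclose a nonempty set `X` unless
they exhaust the rest of the graph. -/
lemma closed_univ (hk : IsKConnected 4 G) {X Y : Finset V} (hX : X.Nonempty) (hY : Y.card < 4)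
    (hd : ∀ v ∈ X, v ∉ Y) (hc : ∀ v ∈ X, ∀ w, G.Adj v w → w ∈ X ∨ w ∈ Y) :
    ∀ v, v ∈ X ∨ v ∈ Y := by
  by_contra hn
  push Not at hn
  obtain ⟨v, hv1, hv2⟩ := hn
  have hs : IsSep G X Y (Finset.univ \ (X ∪ Y)) := by
    refine ⟨hd, by grind, by grind, by grind, ?_⟩
    intro a ha c hc' e
    have := hc a ha c e
    grind
  have := hs.le_card hk hX ⟨v, by simp [hv1, hv2]⟩
  omega

/-- If `w`, `w'` are adjacent vertices of degree four and all edges at them have a common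
neighbour of degree four for their ends, then every common neighbour `x` of `w` and `w'` has
degree four. Otherwise a common neighbour `a ≠ x` of `w`, `w'` is forced, and then `{w, w'}` or
`{w, w', a}` is enclosed by three vertices. -/
lemma card_nb_of_triangle (hk : IsKConnected 4 G) {x w w' : V} (hw : (nb G w).card = 4)
    (hw' : (nb G w').card = 4) (hww : G.Adj w w') (hxw : G.Adj w x) (hxw' : G.Adj w' x)
    (hg : ∀ v, G.Adj w v → Good G w v) (hg' : ∀ v, G.Adj w' v → Good G w' v) :
    (nb G x).card = 4 := by
  by_contra hx
  have hx5 : 5 ≤ (nb G x).card := by have := le_card_nb hk x; omega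
  have small : ∀ p q r s : V, (∀ v, G.Adj x v → v = p ∨ v = q ∨ v = r ∨ v = s) → False := by
    intro p q r s h
    have h1 : nb G x ⊆ {p, q, r, s} := by
      intro v hv
      have := h v (mem_nb.1 hv)
      simpa using this
    have := Finset.card_le_card h1
    have := Finset.card_le_four (a := p) (b := q) (c := r) (d := s)
    omega
  obtain ⟨a, ha, haw, haw'⟩ := hg w' hww
  have hax : a ≠ x := by rintro rfl; exact hx ha
  have e1 := hww.ne
  have e2 := hxw.ne
  have e3 := hxw'.ne
  have e4 := haw.ne
  have e5 := haw'.ne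
  obtain ⟨b, hb1, hb2, hb3, hwb, hNw⟩ := four_nb hw hxw hww haw.symm e3.symm hax.symm e5.symm
  obtain ⟨c, hc1, hc2, hc3, hwc, hNw'⟩ :=
    four_nb hw' hxw' hww.symm haw'.symm e2.symm hax.symm e4.symm
  have e6 := hwb.ne
  have e7 := hwc.ne
  by_cases hbc : b = c
  · subst hbc
    have hu := closed_univ hk (X := {w, w'}) (Y := {x, a, b}) (by simp)
      (Finset.card_le_three.trans_lt (by norm_num)) (by grind) (by grind)
    refine small w w' a b fun v hv => ?_
    have := hu v
    have := hv.ne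
    grind
  · have hab : G.Adj a b := by
      obtain ⟨d, hd, hdw, hdb⟩ := hg b hwb
      rcases hNw d hdw.symm with rfl | rfl | rfl | rfl
      · exact absurd hd hx
      · have := hNw' b hdb
        grind
      · exact hdb
      · exact absurd hdb (G.irrefl)
    have hac : G.Adj a c := by
      obtain ⟨d, hd, hdw, hdc⟩ := hg' c hwc
      rcases hNw' d hdw.symm with rfl | rfl | rfl | rfl
      · exact absurd hd hx
      · have := hNw c hdc
        grind
      · exact hdc
      · exact absurd hdc (G.irrefl)
    have hNa := four_nb_all ha haw haw' hab hac e1 e6 (Ne.symm hc2) (Ne.symm hb2) e7 hbc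
    have hu := closed_univ hk (X := {w, w', a}) (Y := {x, b, c}) (by simp)
      (Finset.card_le_three.trans_lt (by norm_num)) (by grind) (by grind)
    refine small w w' b c fun v hv => ?_
    have := hu v
    have := hv.ne
    have : v ≠ a := by
      rintro rfl
      have := hNa x hv.symm
      grind
    grind

end Local

/-! ### Smallest sides of cuts through bad edges -/

section Minimal

variable [Fintype V] [DecidableEq V] {G : SimpleGraph V}

/-- `A` is a smallest side among all 4-cuts through a bad edge, and `xy` is a bad edge in
the cut `T` with sides `A` and `C`. -/
structure MinCut (G : SimpleGraph V) (A T C : Finset V) (x y : V) : Prop where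
  cut : Cut G A T C x y
  bad : Bad G x y
  le : ∀ {p q : V} {A' T' C' : Finset V}, Bad G p q → Cut G A' T' C' p q → A.card ≤ A'.card

variable {A T C : Finset V} {x y : V}

/-- Opposite corners cannot both be nonempty: the one inside `A` would be a smaller side of a
4-cut through the bad edge `za`. -/
lemma MinCut.corner_empty (hk : IsKConnected 4 G) (h : MinCut G A T C x y) {z a : V}
    {B S D : Finset V} (hz : z ∈ A) (ha : a ∈ A ∨ a ∈ T) (hb : Bad G z a)
    (h' : Cut G B S D z a) : (A ∩ B).card = 0 ∨ (C ∩ D).card = 0 := by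
  by_contra hn
  push Not at hn
  have hp1 : 0 < (A ∩ B).card := by omega
  have hp2 : 0 < (C ∩ D).card := by omega
  have l1 := h.cut.sep.le_corner hk h'.sep hp1 h.cut.neC
  have l2 := h.cut.sep.symm.le_corner hk h'.sep.symm hp2 h.cut.neA
  have s1 := h'.sep.card_split T
  have s2 := h.cut.sep.card_split_left S
  have c1 := h.cut.card
  have c2 := h'.card
  have hco := h.cut.sep.corner h'.sep
  have l3 := hco.le_card hk (Finset.card_pos.1 hp1) (h.cut.neC.mono Finset.subset_union_left)
  have l4 := corner_card_le A T B S
  have hcut : Cut G (A ∩ B) ((T ∩ S) ∪ (T ∩ B) ∪ (A ∩ S)) (C ∪ D) z a := by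
    refine ⟨hco, Finset.card_pos.1 hp1, h.cut.neC.mono Finset.subset_union_left, by omega,
      ?_, ?_⟩
    · simp [hz, h'.memp]
    · have := h'.memq
      simp only [Finset.mem_union, Finset.mem_inter]
      tauto
  have l5 := h.le hb hcut
  have s3 := h'.sep.card_split A
  have := one_le_inter hz h'.memp
  omega

/-- A bad edge meeting the smallest side `A` can only be all of `A`. -/
lemma MinCut.bad_edge (hk : IsKConnected 4 G)
    (crit : ∀ p q, Bad G p q → ∃ B S D, Cut G B S D p q) (h : MinCut G A T C x y) {z a : V}
    (hz : z ∈ A) (hb : Bad G z a) : a ∈ A ∧ A.card = 2 := by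
  have ha : a ∈ A ∨ a ∈ T := by
    rcases h.cut.sep.cover a with ha | ha | ha
    · exact Or.inl ha
    · exact Or.inr ha
    · exact absurd hb.1 (h.cut.sep.nadj z hz a ha)
  obtain ⟨B, S, D, h'⟩ := crit z a hb
  have k1 := h.corner_empty hk hz ha hb h'
  have k2 := h.corner_empty hk hz ha hb h'.symm
  have m0 := h.cut.two_le hk h.bad
  have m1 := h.le h.bad h.cut.symm
  have m2 := h.le hb h'
  have m3 := h.le hb h'.symm
  have c1 := h.cut.card
  have c2 := h'.card
  have s1 := h'.sep.card_split T
  have s2 := h.cut.sep.card_split_left S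
  have s3 := h'.sep.card_split A
  have s4 := h'.sep.card_split C
  have s5 := h.cut.sep.card_split_left B
  have s6 := h.cut.sep.card_split_left D
  have l1 := h.cut.sep.le_corner hk h'.sep (B := B)
  have l2 := h.cut.sep.le_corner hk h'.sep.symm
  have l3 := h.cut.sep.symm.le_corner hk h'.sep
  have l4 := h.cut.sep.symm.le_corner hk h'.sep.symm
  have n1 := fun p => l1 p h.cut.neC
  have n2 := fun p => l2 p h.cut.neC
  have n3 := fun p => l3 p h.cut.neA
  have n4 := fun p => l4 p h.cut.neA
  have hza : 2 ≤ (A ∩ S).card + (T ∩ S).card := by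
    have hsub : ({z, a} : Finset V) ⊆ (A ∩ S) ∪ (T ∩ S) := by
      have := h'.memp
      have := h'.memq
      grind
    have := Finset.card_le_card hsub
    rw [Finset.card_pair hb.1.ne] at this
    exact this.trans (Finset.card_union_le _ _)
  clear l1 l2 l3 l4
  have key : (T ∩ S).card = 0 ∧ A.card = 2 := by omega
  refine ⟨ha.resolve_right fun hT => ?_, key.2⟩
  have := one_le_inter hT h'.memq
  omega

/-- Every edge meeting the smallest side has a common neighbour of degree four for its ends. -/
lemma MinCut.good (hk : IsKConnected 4 G)
    (crit : ∀ p q, Bad G p q → ∃ B S D, Cut G B S D p q) (h : MinCut G A T C x y) {z a : V}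
    (hz : z ∈ A) (hza : G.Adj z a) : Good G z a := by
  by_contra hg
  have hb : Bad G z a := ⟨hza, hg⟩
  obtain ⟨ha, hc⟩ := h.bad_edge hk crit hz hb
  have hA : ∀ v ∈ A, v = z ∨ v = a := by
    have hsub : ({z, a} : Finset V) ⊆ A := by grind
    have := Finset.eq_of_subset_of_card_le hsub (by rw [hc, Finset.card_pair hza.ne])
    intro v hv
    rw [← this] at hv
    simpa using hv
  have hsep := h.cut.sep
  have hN : ∀ u ∈ A, ∀ v, G.Adj u v → v = z ∨ v = a ∨ v ∈ T := by
    intro u hu v e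
    rcases hsep.cover v with hv | hv | hv
    · have := hA v hv; tauto
    · tauto
    · exact absurd e (hsep.nadj u hu v hv)
  have goodT : ∀ t ∈ T, G.Adj z t → Good G z t := by
    intro t ht e
    by_contra hg'
    exact hsep.at_ t (h.bad_edge hk crit hz ⟨e, hg'⟩).1 ht
  have noCommon : ∀ w, (nb G w).card = 4 → G.Adj w z → G.Adj w a → False :=
    fun w h1 h2 h3 => hg ⟨w, h1, h2, h3⟩
  -- `a` has degree at least four and only `z` as neighbour outside `T`.
  have hmiss : ∀ q ∈ T, ∀ w ∈ T, ¬ G.Adj a q → ¬ G.Adj a w → q = w := by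
    intro q hq w hw hq' hw'
    by_contra hne
    have hsub : nb G a ⊆ insert z ((T.erase q).erase w) := by
      intro v hv
      rw [mem_nb] at hv
      have h1 := hN a ha v hv
      have h2 := hv.ne
      have h3 : v ≠ q := by rintro rfl; exact hq' hv
      have h4 : v ≠ w := by rintro rfl; exact hw' hv
      grind
    have h1 := Finset.card_le_card hsub
    have h2 := Finset.card_insert_le z ((T.erase q).erase w)
    rw [Finset.card_erase_of_mem (by grind), Finset.card_erase_of_mem hq, h.cut.card] at h2
    have := le_card_nb hk a
    omega
  -- If `a` sees all of `T`, it has degree five, and any edge from `z` to `T` is bad. Otherwise `a`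
  -- misses exactly one `q ∈ T`, and then `zq` is an edge and is bad.
  by_cases hall : ∀ t ∈ T, G.Adj a t
  · obtain ⟨t, ht, hzt⟩ : ∃ t ∈ T, G.Adj z t := by
      by_contra hn
      push Not at hn
      have hsub : nb G z ⊆ {a} := by
        intro v hv
        rw [mem_nb] at hv
        have := hN z hz v hv
        have := hv.ne
        have := hn v
        grind
      have := Finset.card_le_card hsub
      have := le_card_nb hk z
      simp at *
      omega
    obtain ⟨w, hw, hwz, hwt⟩ := goodT t ht hzt
    rcases hN z hz w hwz.symm with rfl | rfl | hT
    · exact G.irrefl hwz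
    · have hsub : insert z T ⊆ nb G w := by
        intro v hv
        rw [mem_nb]
        rcases Finset.mem_insert.1 hv with rfl | hv
        · exact hwz
        · exact hall v hv
      have := Finset.card_le_card hsub
      rw [Finset.card_insert_of_notMem (hsep.at_ z hz), h.cut.card] at this
      omega
    · exact noCommon w hw hwz (hall w hT).symm
  · push Not at hall
    obtain ⟨q, hq, haq⟩ := hall
    obtain ⟨z', hz', hqz⟩ := hsep.exists_adj hk h.cut.neA h.cut.card hq
    rcases hA z' hz' with rfl | rfl
    · obtain ⟨w, hw, hwz, hwq⟩ := goodT q hq hqz.symm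
      rcases hN _ hz w hwz.symm with rfl | rfl | hT
      · exact G.irrefl hwz
      · exact haq hwq
      · by_cases haw : G.Adj a w
        · exact noCommon w hw hwz haw.symm
        · have := hmiss q hq w hT haq haw
          subst this
          exact G.irrefl hwq
    · exact haq hqz.symm

/-- If `u` is the only neighbour of `t ∈ T` on the other side `C`, then `tu` is good: in a 4-cut
through `tu`, the vertex `t` has no neighbour in the corners inside `C`, so these corners have
boundaries of size at least five. -/
lemma MinCut.good_of_unique (hk : IsKConnected 4 G)
    (crit : ∀ p q, Bad G p q → ∃ B S D, Cut G B S D p q) (h : MinCut G A T C x y) {t u : V}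
    (ht : t ∈ T) (hu : u ∈ C) (htu : G.Adj t u) (huniq : ∀ c ∈ C, G.Adj t c → c = u) :
    Good G t u := by
  by_contra hg
  have hb : Bad G t u := ⟨htu, hg⟩
  obtain ⟨B, S, D, h'⟩ := crit t u hb
  have five : ∀ {B D : Finset V}, Cut G B S D t u → 0 < (C ∩ B).card →
      5 ≤ (T ∩ S).card + (T ∩ B).card + (C ∩ S).card := by
    intro B D h' hp
    refine le_trans (((h.cut.sep.symm.corner h'.sep).five_le hk (Finset.card_pos.1 hp)
      (t := t) ?_ ?_)) (corner_card_le C T B S)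
    · simp [ht, h'.memp]
    · intro c hc e
      have hc' := Finset.mem_inter.1 hc
      rw [huniq c hc'.1 e] at hc'
      exact h'.sep.at_ u hc'.2 h'.memq
  have n3 := five h'
  have n4 := five h'.symm
  have m0 := h.cut.two_le hk h.bad
  have m1 := h.le h.bad h.cut.symm
  have m2 := h.le hb h'
  have m3 := h.le hb h'.symm
  have c1 := h.cut.card
  have c2 := h'.card
  have s1 := h'.sep.card_split T
  have s2 := h.cut.sep.card_split_left S
  have s3 := h'.sep.card_split A
  have s4 := h'.sep.card_split C
  have s5 := h.cut.sep.card_split_left B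
  have s6 := h.cut.sep.card_split_left D
  have n1 := fun p => h.cut.sep.le_corner hk h'.sep p h.cut.neC
  have n2 := fun p => h.cut.sep.le_corner hk h'.sep.symm p h.cut.neC
  have i1 := one_le_inter ht h'.memp
  have i2 := one_le_inter hu h'.memq
  omega

end Minimal

/-! ### Excluding bad edges -/

section NoBad

variable [Fintype V] [DecidableEq V] {G : SimpleGraph V} {A T C : Finset V} {x y : V}

/-- A degree-four cut vertex `t` with only one neighbour in `C` has a partner `t'`: the two have a
common neighbour of degree four, and neither is adjacent to any other vertex of the cut. -/
lemma MinCut.partner (hk : IsKConnected 4 G)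
    (crit : ∀ p q, Bad G p q → ∃ B S D, Cut G B S D p q) (h : MinCut G A T C x y) {t u : V}
    (ht : t ∈ T) (hdeg : (nb G t).card = 4) (hu : u ∈ C) (htu : G.Adj t u)
    (huniq : ∀ c ∈ C, G.Adj t c → c = u) :
    ∃ t', Good G t t' ∧ (∀ v ∈ T, G.Adj t v → v = t') ∧ (∀ v ∈ T, G.Adj t' v → v = t) := by
  have hsep := h.cut.sep
  have hA2 := h.cut.two_le hk h.bad
  have hC2 : 2 ≤ C.card := h.cut.symm.two_le hk h.bad
  have AC : ∀ a ∈ A, ∀ c ∈ C, ¬ G.Adj c a := fun a ha c hc e => hsep.nadj a ha c hc e.symm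
  obtain ⟨t', hdeg', e1, e2⟩ := h.good_of_unique hk crit ht hu htu huniq
  have ht' : t' ∈ T := by
    rcases hsep.cover t' with h1 | h1 | h1
    · exact absurd e2 (hsep.nadj _ h1 _ hu)
    · exact h1
    · have := huniq t' h1 e1.symm
      exact absurd e2 (this ▸ G.irrefl)
  obtain ⟨u', hu', e3, huu⟩ : ∃ c ∈ C, G.Adj t' c ∧ c ≠ u := by
    by_contra hn
    push Not at hn
    exact hsep.symm.no_shared hk hC2 h.cut.card ht ht' e1.ne.symm hu huniq hn
  obtain ⟨z, hz, e4⟩ := hsep.exists_adj hk h.cut.neA h.cut.card ht'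
  have ha := hsep.at_
  have hc := hsep.ac
  have hd := hsep.tc
  have hN' := four_nb_all hdeg' e1 e2 e3 e4 (by grind) (by grind) (by grind) huu.symm
    (by grind) (by grind)
  have e5 : G.Adj t z := by
    obtain ⟨v, hv, e, e'⟩ := h.good hk crit hz e4.symm
    rcases hN' v e'.symm with rfl | rfl | rfl | rfl
    · exact e
    · exact absurd e (AC _ hz _ hu)
    · exact absurd e (AC _ hz _ hu')
    · exact absurd e G.irrefl
  obtain ⟨p, hp1, hp2, hp3, e6, hN⟩ := four_nb hdeg e1.symm htu e5 (by grind) (by grind) (by grind)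
  have hp : p ∈ A := by
    rcases hsep.cover p with h1 | h1 | h1
    · exact h1
    · exfalso
      exact hsep.no_shared hk hA2 h.cut.card ht ht' e1.ne.symm hz (by grind) (by grind)
    · exact absurd (huniq p h1 e6) hp2
  have hz4 : (nb G z).card = 4 := by
    obtain ⟨v, hv, e, e'⟩ := h.good hk crit hp e6.symm
    rcases hN v e'.symm with rfl | rfl | rfl | rfl
    · have := hN' p e
      grind
    · exact absurd e (AC _ hp _ hu)
    · exact hv
    · exact absurd e G.irrefl
  exact ⟨t', ⟨z, hz4, e5.symm, e4.symm⟩, by grind, by grind⟩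

/-- No smallest side exists: `x` would have two adjacent neighbours of degree four in `A`, hence
degree four itself and a unique neighbour in `C`. -/
lemma MinCut.false (hk : IsKConnected 4 G)
    (crit : ∀ p q, Bad G p q → ∃ B S D, Cut G B S D p q) (h : MinCut G A T C x y) : False := by
  have hsep := h.cut.sep
  have hA2 := h.cut.two_le hk h.bad
  have ha := hsep.at_
  have hc := hsep.ac
  have hd := hsep.tc
  have hx := h.cut.memp
  have hy := h.cut.memq
  have hxy := h.bad.1
  have AC : ∀ a ∈ A, ∀ c ∈ C, ¬ G.Adj c a := fun a ha c hc e => hsep.nadj a ha c hc e.symm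
  -- In degree four, `x` would have a unique neighbour in `C` and `y` would be its
  -- partner, making `xy` a good edge.
  have notFour : (nb G x).card = 4 → ∀ p q, p ∉ C → q ∉ C → G.Adj x p → G.Adj x q →
      p ≠ q → p ≠ y → q ≠ y → False := by
    intro hx4 p q hp hq e1 e2 hpq hpy hqy
    obtain ⟨u, hu, e3⟩ := hsep.symm.exists_adj hk h.cut.neC h.cut.card hx
    have hN := four_nb_all hx4 e1 e2 hxy e3 hpq hpy (by grind) hqy (by grind) (by grind)
    obtain ⟨t', hg, h1, -⟩ := h.partner hk crit hx hx4 hu e3 (by grind)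
    exact h.bad.2 (h1 y hy hxy ▸ hg)
  -- The degree-four common neighbour provided by a good edge from `x` to `A` lies in `A`.
  have inA : ∀ z ∈ A, G.Adj x z → ∃ w ∈ A, (nb G w).card = 4 ∧ G.Adj w x ∧ G.Adj w z := by
    intro z hz hxz
    obtain ⟨w, hw, hwz, hwx⟩ := h.good hk crit hz hxz.symm
    refine ⟨w, ?_, hw, hwx, hwz⟩
    rcases hsep.cover w with hwA | hwT | hwC
    · exact hwA
    · exfalso
      obtain ⟨u, hu, e1⟩ := hsep.symm.exists_adj hk h.cut.neC h.cut.card hwT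
      by_cases hun : ∀ c ∈ C, G.Adj w c → c = u
      · obtain ⟨t', hg, h1, h2⟩ := h.partner hk crit hwT hw hu e1 hun
        have h3 := h1 x hx hwx
        subst h3
        have h4 := h2 y hy hxy
        subst h4
        exact h.bad.2 hg.symm
      · push Not at hun
        obtain ⟨u', hu', e2, huu⟩ := hun
        have hN := four_nb_all hw hwx hwz e1 e2 (by grind) (by grind) (by grind) (by grind)
          (by grind) huu.symm
        have hx4 : (nb G x).card = 4 := by
          obtain ⟨v, hv, e, e'⟩ := h.good hk crit hz hwz.symm
          rcases hN v e'.symm with rfl | rfl | rfl | rfl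
          · exact hv
          · exact absurd e G.irrefl
          · exact absurd e (AC _ hz _ hu)
          · exact absurd e (AC _ hz _ hu')
        by_cases hwy : w = y
        · subst hwy
          -- `x` and `w` do not both have `z` as their only neighbour in `A`.
          obtain ⟨z2, hz2, e3, hzz⟩ : ∃ z2 ∈ A, G.Adj x z2 ∧ z2 ≠ z := by
            by_contra hn
            push Not at hn
            exact hsep.no_shared hk hA2 h.cut.card hx hwT hxy.ne hz hn (by grind)
          exact notFour hx4 z z2 (hc _ hz) (hc _ hz2) hxz e3 hzz.symm (by grind) (by grind)
        · exact notFour hx4 z w (hc _ hz) (hd _ hwT) hxz hwx.symm (by grind) (by grind) hwy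
    · exact absurd hwz (AC _ hz _ hwC)
  obtain ⟨z, hz, hxz⟩ := hsep.exists_adj hk h.cut.neA h.cut.card hx
  obtain ⟨w, hwA, hw, hwx, -⟩ := inA z hz hxz
  obtain ⟨w', hwA', hw', hwx', hww⟩ := inA w hwA hwx.symm
  have hx4 := card_nb_of_triangle hk hw' hw hww hwx' hwx
    (fun v e => h.good hk crit hwA' e) (fun v e => h.good hk crit hwA e)
  exact notFour hx4 w' w (hc _ hwA') (hc _ hwA) hwx'.symm hwx.symm hww.ne (by grind) (by grind)

lemma good_of_adj (hk : IsKConnected 4 G)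
    (crit : ∀ p q, Bad G p q → ∃ B S D, Cut G B S D p q) {p q : V} (hpq : G.Adj p q) :
    Good G p q := by
  by_contra hg
  have hex : ∃ n, ∃ p q A T C, Bad G p q ∧ Cut G A T C p q ∧ A.card = n := by
    obtain ⟨B, S, D, h⟩ := crit p q ⟨hpq, hg⟩
    exact ⟨_, p, q, B, S, D, ⟨hpq, hg⟩, h, rfl⟩
  classical
  obtain ⟨p, q, A, T, C, hb, hcut, hn⟩ := Nat.find_spec hex
  refine MinCut.false (A := A) (T := T) (C := C) hk crit ⟨hcut, hb, ?_⟩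
  intro p' q' A' T' C' hb' hcut'
  rw [hn]
  exact Nat.find_min' hex ⟨p', q', A', T', C', hb', hcut', rfl⟩

lemma card_nb_eq_four (hk : IsKConnected 4 G) (hg : ∀ p q, G.Adj p q → Good G p q) (v : V) :
    (nb G v).card = 4 := by
  have := le_card_nb hk v
  obtain ⟨u, hu⟩ := Finset.card_pos.1 (show 0 < (nb G v).card by omega)
  obtain ⟨w, hw, hwv, -⟩ := hg v u (mem_nb.1 hu)
  obtain ⟨w', hw', hwv', hww⟩ := hg v w hwv.symm
  exact card_nb_of_triangle hk hw hw' hww.symm hwv hwv' (hg w) (hg w')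

end NoBad

/-! ### Contracting an edge -/

section Contraction

variable [DecidableEq V] {G : SimpleGraph V} {x y : V}

lemma contractE_adj {a b : {v : V // v ≠ y}} : (contractE G x y).Adj a b ↔
    a ≠ b ∧ (G.Adj a.1 b.1 ∨ (a.1 = x ∧ G.Adj y b.1) ∨ (b.1 = x ∧ G.Adj y a.1)) := by
  simp only [contractE, SimpleGraph.fromRel_adj]
  have := G.adj_comm a.1 b.1
  tauto

/-- A separator of `G/xy` avoiding the contracted vertex lifts to one of `G`, with `y` placed on
the side of `x`. -/
lemma IsSep.lift {P S Q : Finset {v : V // v ≠ y}} (hxy : G.Adj x y)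
    (h : IsSep (contractE G x y) P S Q) (hx : ⟨x, hxy.ne⟩ ∈ P) :
    IsSep G (insert y (P.map (Function.Embedding.subtype _)))
      (S.map (Function.Embedding.subtype _)) (Q.map (Function.Embedding.subtype _)) := by
  have h1 := h.at_
  have h2 := h.ac
  have h3 := h.tc
  refine ⟨?_, ?_, ?_, ?_, ?_⟩
  · simp only [Finset.mem_insert, Finset.mem_map, Function.Embedding.coe_subtype,
      Subtype.exists, exists_and_right, exists_eq_right]
    rintro v (rfl | ⟨hv, hv'⟩) ⟨g, g'⟩
    · exact g rfl
    · exact h1 _ hv' g'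
  · simp only [Finset.mem_insert, Finset.mem_map, Function.Embedding.coe_subtype,
      Subtype.exists, exists_and_right, exists_eq_right]
    rintro v (rfl | ⟨hv, hv'⟩) ⟨g, g'⟩
    · exact g rfl
    · exact h2 _ hv' g'
  · simp only [Finset.mem_map, Function.Embedding.coe_subtype,
      Subtype.exists, exists_and_right, exists_eq_right]
    rintro v ⟨hv, hv'⟩ ⟨g, g'⟩
    exact h3 _ hv' g'
  · intro v
    simp only [Finset.mem_insert, Finset.mem_map, Function.Embedding.coe_subtype,
      Subtype.exists, exists_and_right, exists_eq_right]
    by_cases hv : v = y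
    · exact Or.inl (Or.inl hv)
    · rcases h.cover ⟨v, hv⟩ with g | g | g
      · exact Or.inl (Or.inr ⟨hv, g⟩)
      · exact Or.inr (Or.inl ⟨hv, g⟩)
      · exact Or.inr (Or.inr ⟨hv, g⟩)
  · simp only [Finset.mem_insert, Finset.mem_map, Function.Embedding.coe_subtype,
      Subtype.exists, exists_and_right, exists_eq_right]
    rintro v (rfl | ⟨hv, hv'⟩) c ⟨g, g'⟩ e
    · refine h.nadj _ hx _ g' (contractE_adj.2 ⟨?_, Or.inr (Or.inl ⟨rfl, e⟩)⟩)
      intro heq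
      exact h2 _ hx (heq ▸ g')
    · refine h.nadj _ hv' _ g' (contractE_adj.2 ⟨?_, Or.inl e⟩)
      intro heq
      exact h2 _ hv' (heq ▸ g')

/-- Adding `y` to a separator of `G/xy` gives a separator of `G`. -/
lemma IsSep.lift_cut {P S Q : Finset {v : V // v ≠ y}}
    (h : IsSep (contractE G x y) P S Q) :
    IsSep G (P.map (Function.Embedding.subtype _))
      (insert y (S.map (Function.Embedding.subtype _)))
      (Q.map (Function.Embedding.subtype _)) := by
  have h1 := h.at_
  have h2 := h.ac
  have h3 := h.tc
  refine ⟨?_, ?_, ?_, ?_, ?_⟩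
  · simp only [Finset.mem_insert, Finset.mem_map, Function.Embedding.coe_subtype,
      Subtype.exists, exists_and_right, exists_eq_right]
    rintro v ⟨hv, hv'⟩ (rfl | ⟨g, g'⟩)
    · exact hv rfl
    · exact h1 _ hv' g'
  · simp only [Finset.mem_map, Function.Embedding.coe_subtype,
      Subtype.exists, exists_and_right, exists_eq_right]
    rintro v ⟨hv, hv'⟩ ⟨g, g'⟩
    exact h2 _ hv' g'
  · simp only [Finset.mem_insert, Finset.mem_map, Function.Embedding.coe_subtype,
      Subtype.exists, exists_and_right, exists_eq_right]
    rintro v (rfl | ⟨hv, hv'⟩) ⟨g, g'⟩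
    · exact g rfl
    · exact h3 _ hv' g'
  · intro v
    simp only [Finset.mem_insert, Finset.mem_map, Function.Embedding.coe_subtype,
      Subtype.exists, exists_and_right, exists_eq_right]
    by_cases hv : v = y
    · exact Or.inr (Or.inl (Or.inl hv))
    · rcases h.cover ⟨v, hv⟩ with g | g | g
      · exact Or.inl ⟨hv, g⟩
      · exact Or.inr (Or.inl (Or.inr ⟨hv, g⟩))
      · exact Or.inr (Or.inr ⟨hv, g⟩)
  · simp only [Finset.mem_map, Function.Embedding.coe_subtype,
      Subtype.exists, exists_and_right, exists_eq_right]
    rintro v ⟨hv, hv'⟩ c ⟨g, g'⟩ e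
    refine h.nadj _ hv' _ g' (contractE_adj.2 ⟨?_, Or.inl e⟩)
    intro heq
    exact h2 _ hv' (heq ▸ g')

variable [Fintype V]

lemma card_contract : Fintype.card {v : V // v ≠ y} = Fintype.card V - 1 := by
  simp [Fintype.card_subtype_compl]

/-- If contracting a bad edge `xy` destroys 4-connectivity, then `x` and `y` lie in a common
4-cut. On five vertices there is no bad edge, as `G` is then complete. -/
lemma exists_cut (hk : IsKConnected 4 G) (hb : Bad G x y)
    (hc : ¬ IsKConnected 4 (contractE G x y)) : ∃ B S D, Cut G B S D x y := by
  have hxy := hb.1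
  by_cases h5 : 4 + 1 ≤ Fintype.card {v : V // v ≠ y}
  · obtain ⟨P, S, Q, h, hP, hQ, hS⟩ := exists_sep_of_not_isKConnected h5 hc
    rcases h.cover ⟨x, hxy.ne⟩ with hx | hx | hx
    · have := (h.lift hxy hx).le_card hk (by simp) (by simpa using hQ)
      rw [Finset.card_map] at this
      omega
    · have hl := h.lift_cut
      have h4 := hl.le_card hk (by simpa using hP) (by simpa using hQ)
      have hle := Finset.card_insert_le y (S.map (Function.Embedding.subtype _))
      rw [Finset.card_map] at hle
      refine ⟨_, _, _, hl, by simpa using hP, by simpa using hQ, by omega, ?_, by simp⟩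
      refine Finset.mem_insert_of_mem (Finset.mem_map.2 ⟨_, hx, rfl⟩)
    · have := (h.symm.lift hxy hx).le_card hk (by simp) (by simpa using hP)
      rw [Finset.card_map] at this
      omega
  · exfalso
    rw [card_contract] at h5
    have hV := hk.1
    have hnb : ∀ v, nb G v = Finset.univ.erase v := by
      intro v
      refine Finset.eq_of_subset_of_card_le (fun w hw => ?_) ?_
      · have := (mem_nb.1 hw).ne
        simp [this.symm]
      · have := le_card_nb hk v
        rw [Finset.card_erase_of_mem (by simp), Finset.card_univ]
        omega
    obtain ⟨z, hz⟩ : ∃ z, z ∉ ({x, y} : Finset V) := by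
      by_contra hn
      push Not at hn
      have h1 : Finset.univ ⊆ ({x, y} : Finset V) := fun z _ => hn z
      have h2 := Finset.card_le_card h1
      have h3 := Finset.card_le_two (a := x) (b := y)
      rw [Finset.card_univ] at h2
      omega
    simp only [Finset.mem_insert, Finset.mem_singleton, not_or] at hz
    refine hb.2 ⟨z, ?_, ?_, ?_⟩
    · rw [hnb, Finset.card_erase_of_mem (by simp), Finset.card_univ]
      omega
    · rw [← mem_nb, hnb]; simp [Ne.symm hz.1]
    · rw [← mem_nb, hnb]; simp [Ne.symm hz.2]

/-- A common neighbour `z` of degree four has degree at most three after contracting `xy`. -/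
lemma not_isKConnected_contractE (hg : Good G x y) :
    ¬ IsKConnected 4 (contractE G x y) := by
  intro hk
  obtain ⟨z, hz, hzx, hzy⟩ := hg
  have hadj : ∀ v : {v : V // v ≠ y}, (contractE G x y).Adj ⟨z, hzy.ne⟩ v → G.Adj z v.1 := by
    intro v hv
    rcases (contractE_adj.1 hv).2 with h | ⟨h, -⟩ | ⟨h, -⟩
    · exact h
    · exact absurd hzx (by rw [← h]; exact G.irrefl)
    · rw [h]; exact hzx
  have hsub : (nb (contractE G x y) ⟨z, hzy.ne⟩).map (Function.Embedding.subtype _) ⊆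
      (nb G z).erase y := by
    intro v hv
    obtain ⟨w, hw, rfl⟩ := Finset.mem_map.1 hv
    exact Finset.mem_erase.2 ⟨w.2, mem_nb.2 (hadj w (mem_nb.1 hw))⟩
  have h1 := Finset.card_le_card hsub
  rw [Finset.card_map, Finset.card_erase_of_mem (mem_nb.2 hzy), hz] at h1
  have h2 := le_card_nb hk ⟨z, hzy.ne⟩
  omega

end Contraction

/-- Martinov: A 4-connected graph is contraction critical iff it
is 4-regular and every edge lies in a triangle. -/
theorem stmt5 {V : Type*} [Fintype V] [DecidableEq V] (G : SimpleGraph V)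
    (hG : IsKConnected 4 G) :
    (∀ x y : V, G.Adj x y → ¬ IsKConnected 4 (contractE G x y)) ↔
      ((∀ v : V, (G.neighborSet v).ncard = 4) ∧
        ∀ x y : V, G.Adj x y → ∃ z : V, G.Adj x z ∧ G.Adj y z) := by
  constructor
  · intro hc
    have hg : ∀ p q, G.Adj p q → Good G p q := fun p q hpq =>
      good_of_adj hG (fun p q hb => exists_cut hG hb (hc p q hb.1)) hpq
    refine ⟨fun v => (ncard_nb v).trans (card_nb_eq_four hG hg v), fun x y hxy => ?_⟩
    obtain ⟨z, -, h1, h2⟩ := hg x y hxy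
    exact ⟨z, h1.symm, h2.symm⟩
  · rintro ⟨h4, ht⟩ x y hxy
    obtain ⟨z, h1, h2⟩ := ht x y hxy
    exact not_isKConnected_contractE ⟨z, (ncard_nb z).symm.trans (h4 z), h1.symm, h2.symm⟩
end

section
/- Let G be a contraction critical quasi 5-connected graph such that d_G(u) + d_G(v) ≥ 9 for every pair of vertices u, v at distance one or two. Then G has no vertex x of degree 4 whose neighborhood N_G(x) induces an edgeless graph on 4 vertices. -/
/-!
Suppose `x` has degree 4 and an independent neighbourhood. By the degree condition every
other vertex within distance two of `x` has degree at least 5. The ends of an edge `xa` have no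
common neighbour, so the failure of contracting `xa` gives a separator of order 5 containing `x` and
`a` with at least two vertices on both sides (a *good* separation, `Good`).

Separators of order 5 through `x` and one of its neighbours never cut off a single vertex
(`Ctx.two_le`), and corners of crossing good separations need a separator of order at least 5
(`Ctx.five`). Counting in the corners shows that an inclusion-minimal good side has exactly two
vertices (`Ctx.cross`), and the degree bounds then determine it completely (`TwoSide`): it is
`{a, w}` with `a` adjacent to `x`, its separator `T` contains exactly one neighbour `y` of `x`,
`a` is adjacent to `w` and `T \ {y}`, and `w` is adjacent to `a` and `T \ {x}`. In particular every
side of every good separation contains such a two-side.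

The main point is that the vertex `y` belongs to no two-side (`TwoSide.false_of_chain`). If `y` were
in a two-side `{y, t}`, then `w` and `t` would be adjacent, and no vertex of degree 4 would see
both, so a separator of order 5 contains `wt`. Whether or not it contains `x`, shifting one or two
vertices contradicts what is known.

Finally, a good separation through `xa` has a two-side in each of its two sides, at neighbours
`c` and `d` of `x`. Thus `a`, `c`, `d` lie in two-sides and `y` is the fourth neighbour of `x`, so
the separators of all these two-sides contain `y`. Then `y` has neighbours on both sides
of the separation through `xa` and has to lie in its separator, which meets `T` only in `x`
(`Ctx.false`).
-/

open SimpleGraph Set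

variable {V : Type*}

namespace QuasiFive

/-! ### Separations -/

/-- The neighbourhood of `v` as a finset. -/
noncomputable def nb [Fintype V] (G : SimpleGraph V) (v : V) : Finset V := by
  classical exact Finset.univ.filter (G.Adj v)

@[simp] lemma mem_nb [Fintype V] {G : SimpleGraph V} {u v : V} : u ∈ nb G v ↔ G.Adj v u := by
  simp [nb]

lemma card_nb [Fintype V] (G : SimpleGraph V) (v : V) :
    (G.neighborSet v).ncard = (nb G v).card := by
  rw [← Set.ncard_coe_finset]
  congr 1
  ext u
  simp

/-- The partition `A ∪ T ∪ B` of the vertex set is a separation: no edge joins `A` and `B`. -/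
structure Sep (G : SimpleGraph V) (A T B : Finset V) : Prop where
  cover : ∀ v, v ∈ A ∨ v ∈ T ∨ v ∈ B
  notAT : ∀ v ∈ A, v ∉ T
  notAB : ∀ v ∈ A, v ∉ B
  notTB : ∀ v ∈ T, v ∉ B
  noedge : ∀ a ∈ A, ∀ b ∈ B, ¬ G.Adj a b

lemma Sep.symm {G : SimpleGraph V} {A T B : Finset V} (h : Sep G A T B) : Sep G B T A where
  cover v := by have := h.cover v; tauto
  notAT v hv hT := h.notTB v hT hv
  notAB v hv hA := h.notAB v hA hv
  notTB v hT hA := h.notAT v hA hT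
  noedge a ha b hb hab := h.noedge b hb a ha hab.symm

lemma Sep.card_inter [DecidableEq V] {G : SimpleGraph V} {C S D : Finset V} (h : Sep G C S D)
    (X : Finset V) : X.card = (X ∩ C).card + (X ∩ S).card + (X ∩ D).card := by
  obtain ⟨h1, h2, h3, h4, -⟩ := h
  rw [← Finset.card_union_of_disjoint, ← Finset.card_union_of_disjoint]
  · congr 1
    ext v
    have := h1 v
    simp only [Finset.mem_union, Finset.mem_inter]
    tauto
  · rw [Finset.disjoint_left]; intro v; have := h3 v; have := h4 v
    simp only [Finset.mem_union, Finset.mem_inter]; tauto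
  · rw [Finset.disjoint_left]; intro v; have := h2 v
    simp only [Finset.mem_inter]; tauto

/-- The corner `A ∩ C` of two crossing separations is itself one side of a separation. -/
lemma Sep.quad [DecidableEq V] {G : SimpleGraph V} {A T B C S D : Finset V}
    (h : Sep G A T B) (k : Sep G C S D) :
    Sep G (A ∩ C) (T ∩ C ∪ T ∩ S ∪ A ∩ S) (B ∪ D) := by
  obtain ⟨h1, h2, h3, h4, h5⟩ := h
  obtain ⟨k1, k2, k3, k4, k5⟩ := k
  refine ⟨fun v => ?_, fun v => ?_, fun v => ?_, fun v => ?_, fun a ha b hb => ?_⟩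
  · have := h1 v; have := k1 v
    simp only [Finset.mem_union, Finset.mem_inter]; tauto
  · have := h2 v; have := k2 v
    simp only [Finset.mem_union, Finset.mem_inter]; tauto
  · have := h3 v; have := k3 v
    simp only [Finset.mem_union, Finset.mem_inter]; tauto
  · have := h3 v; have := h4 v; have := k3 v; have := k4 v
    simp only [Finset.mem_union, Finset.mem_inter]; tauto
  · simp only [Finset.mem_union, Finset.mem_inter] at ha hb
    rcases hb with hb | hb
    · exact h5 a ha.1 b hb
    · exact k5 a ha.2 b hb

lemma Sep.card_quad [DecidableEq V] {G : SimpleGraph V} {A T B C S D : Finset V}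
    (h : Sep G A T B) (k : Sep G C S D) :
    (T ∩ C ∪ T ∩ S ∪ A ∩ S).card = (T ∩ C).card + (T ∩ S).card + (A ∩ S).card := by
  rw [Finset.card_union_of_disjoint, Finset.card_union_of_disjoint]
  · rw [Finset.disjoint_left]; intro v; have := k.notAT v
    simp only [Finset.mem_inter]; tauto
  · rw [Finset.disjoint_left]; intro v; have := h.notAT v
    simp only [Finset.mem_union, Finset.mem_inter]; tauto

lemma Sep.of_closed [Fintype V] [DecidableEq V] {G : SimpleGraph V} {A T : Finset V}
    (hd : ∀ v ∈ A, v ∉ T) (hc : ∀ a ∈ A, ∀ v, G.Adj a v → v ∈ A ∨ v ∈ T) :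
    Sep G A T (A ∪ T)ᶜ where
  cover v := by simp only [Finset.mem_compl, Finset.mem_union]; tauto
  notAT := hd
  notAB v := by simp only [Finset.mem_compl, Finset.mem_union]; tauto
  notTB v := by simp only [Finset.mem_compl, Finset.mem_union]; tauto
  noedge a ha b hb hab := by
    have := hc a ha b hab
    simp only [Finset.mem_compl, Finset.mem_union] at hb; tauto

/-! ### Separations through `x` -/

/-- The situation to be refuted, with what is used about it: `x` has degree 4 and an
independent neighbourhood, every other vertex within distance two of `x` has degree at least 5,
`G` is quasi 5-connected, and every edge whose ends have no common neighbour of degree 4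
lies in a separator of order 5 with at least two vertices on either side. -/
structure Ctx [Fintype V] (G : SimpleGraph V) (x : V) : Prop where
  card : 9 ≤ Fintype.card V
  conn : ∀ A T B, Sep G A T B → A.Nonempty → B.Nonempty → 4 ≤ T.card
  conn5 : ∀ A T B, Sep G A T B → 2 ≤ A.card → 2 ≤ B.card → 5 ≤ T.card
  contr : ∀ u v, G.Adj u v → (∀ w, G.Adj u w → G.Adj v w → 5 ≤ (nb G w).card) →
    ∃ A T B, Sep G A T B ∧ T.card = 5 ∧ 2 ≤ A.card ∧ 2 ≤ B.card ∧ u ∈ T ∧ v ∈ T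
  ind : ∀ a b, G.Adj x a → G.Adj x b → ¬ G.Adj a b
  degx : (nb G x).card = 4
  near : ∀ v, v ≠ x → (G.Adj x v ∨ ∃ y, G.Adj x y ∧ G.Adj y v) → 5 ≤ (nb G v).card

/-- A separation of order 5 with both sides of size at least two whose separator contains `x`
and a neighbour of `x`. -/
structure Good (G : SimpleGraph V) (x : V) (A T B : Finset V) : Prop where
  sep : Sep G A T B
  cT : T.card = 5
  cA : 2 ≤ A.card
  cB : 2 ≤ B.card
  xT : x ∈ T
  ex : ∃ y ∈ T, G.Adj x y

lemma Good.symm {G : SimpleGraph V} {x : V} {A T B : Finset V} (h : Good G x A T B) :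
    Good G x B T A := ⟨h.sep.symm, h.cT, h.cB, h.cA, h.xT, h.ex⟩

/-- `{a, w}` is cut off by the separator `T` of order 5, and the whole adjacency of `a` and
`w` is determined: `y` is a neighbour of `x` in `T`, `a` misses exactly `y` in `T`, and `w`
misses exactly `x` in `T`. -/
structure TwoSide (G : SimpleGraph V) (x a w y : V) (T : Finset V) : Prop where
  xa : G.Adj x a
  xy : G.Adj x y
  xT : x ∈ T
  yT : y ∈ T
  aT : a ∉ T
  wT : w ∉ T
  aw : a ≠ w
  cT : T.card = 5
  Na : ∀ v, G.Adj a v ↔ v = w ∨ (v ∈ T ∧ v ≠ y)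
  Nw : ∀ v, G.Adj w v ↔ v = a ∨ (v ∈ T ∧ v ≠ x)

set_option linter.unusedSectionVars false

section
variable [Fintype V] [DecidableEq V] {G : SimpleGraph V} {x : V}

lemma Sep.nb_subset {A T B : Finset V} {z : V} (h : Sep G A T B) (hA : A = {z}) :
    nb G z ⊆ T := by
  intro v hv
  rw [mem_nb] at hv
  subst hA
  rcases h.cover v with h1 | h1 | h1
  · simp only [Finset.mem_singleton] at h1; subst h1; exact absurd hv (G.loopless.irrefl _)
  · exact h1
  · exact absurd hv (h.noedge z (by simp) v h1)

lemma Ctx.deg4 (K : Ctx G x) (v : V) : 4 ≤ (nb G v).card := by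
  by_contra hlt
  have hs : Sep G {v} (nb G v) ({v} ∪ nb G v)ᶜ := by
    apply Sep.of_closed
    · simp
    · intro a ha u hu
      simp only [Finset.mem_singleton] at ha; subst ha; simp [hu]
  have h1 := K.conn _ _ _ hs (by simp) ?_
  · omega
  · rw [← Finset.card_pos, Finset.card_compl]
    have := K.card
    have := Finset.card_union_le {v} (nb G v)
    simp only [Finset.card_singleton] at this
    omega

/-- A separator that contains `x` or a neighbour of `x`, and cuts off a set avoiding `x`, has order at
least 5: one of order 4 would be the neighbourhood of a vertex of degree 4 too close to `x`. -/
lemma Ctx.five (K : Ctx G x) {A T B : Finset V} (h : Sep G A T B) (hA : A.Nonempty)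
    (hB : 2 ≤ B.card) (hx : x ∉ A) (hT : ∃ y ∈ T, y = x ∨ G.Adj x y) : 5 ≤ T.card := by
  by_contra hlt
  have h2 : ¬ 2 ≤ A.card := fun h2 => hlt (K.conn5 _ _ _ h h2 hB)
  have h1 := Finset.card_pos.2 hA
  obtain ⟨z, hz⟩ := Finset.card_eq_one.1 (show A.card = 1 by omega)
  have hsub := h.nb_subset hz
  have hd := K.deg4 z
  have heq := Finset.eq_of_subset_of_card_le hsub (by omega)
  obtain ⟨y, hy, hy2⟩ := hT
  have hzy : G.Adj z y := by rw [← heq] at hy; simpa using hy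
  have := K.near z (by rintro rfl; simp [hz] at hx) (by
    rcases hy2 with rfl | hy2
    · exact Or.inl hzy.symm
    · exact Or.inr ⟨y, hy2, hzy.symm⟩)
  rw [heq] at this
  exact hlt this

/-- The separators of order 5 through `x` and a neighbour of `x` never cut off a single vertex. Such
a vertex `z` would either be adjacent to `x` and to the whole separator, giving a triangle at `x`,
or have degree 4 and be at distance two from `x`. -/
lemma Ctx.two_le (K : Ctx G x) {A T B : Finset V} (h : Sep G A T B) (hA : A.Nonempty)
    (hc : T.card = 5) (hx : x ∈ T) (hT : ∃ y ∈ T, G.Adj x y) : 2 ≤ A.card := by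
  by_contra h2
  have h1 := Finset.card_pos.2 hA
  obtain ⟨z, hz⟩ := Finset.card_eq_one.1 (show A.card = 1 by omega)
  have hsub := h.nb_subset hz
  have hd := K.deg4 z
  have hzx : z ≠ x := by rintro rfl; exact h.notAT z (by simp [hz]) hx
  obtain ⟨y, hy, hxy⟩ := hT
  by_cases hadj : G.Adj x z
  · have heq := Finset.eq_of_subset_of_card_le hsub (by have := K.near z hzx (.inl hadj); omega)
    rw [← heq, mem_nb] at hy
    exact K.ind z y hadj hxy hy
  · have hsub2 : nb G z ⊆ T.erase x := by
      intro v hv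
      refine Finset.mem_erase.2 ⟨?_, hsub hv⟩
      rintro rfl
      exact hadj (mem_nb.1 hv).symm
    have hce := Finset.card_erase_of_mem hx
    have heq := Finset.eq_of_subset_of_card_le hsub2 (by omega)
    have hyz : y ∈ nb G z := by rw [heq]; exact Finset.mem_erase.2 ⟨hxy.ne', hy⟩
    have := K.near z hzx (.inr ⟨y, hxy, (mem_nb.1 hyz).symm⟩)
    rw [heq] at this
    omega

/-- A vertex of a separator of order 5 with nontrivial sides has a neighbour in the side `A`: without
one it could be moved to `B`, leaving a nontrivial 4-cut. -/
lemma Ctx.nbr_left (K : Ctx G x) {A T B : Finset V} (h : Sep G A T B) (hc : T.card = 5)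
    (hA : 2 ≤ A.card) (hB : 2 ≤ B.card) {v : V} (hv : v ∈ T) : ∃ a ∈ A, G.Adj v a := by
  by_contra! hno
  obtain ⟨h1, h2, h3, h4, h5⟩ := h
  have hs : Sep G A (T.erase v) (insert v B) := by
    refine ⟨fun u => ?_, fun u => ?_, fun u => ?_, fun u => ?_, fun a ha b hb => ?_⟩
    · have := h1 u
      simp only [Finset.mem_erase, Finset.mem_insert]; tauto
    · have := h2 u
      simp only [Finset.mem_erase]; tauto
    · have := h3 u; have := h2 u
      simp only [Finset.mem_insert]; rintro h (rfl | h) <;> tauto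
    · have := h4 u
      simp only [Finset.mem_erase, Finset.mem_insert]; tauto
    · rcases Finset.mem_insert.1 hb with rfl | hb
      · exact fun h => hno a ha h.symm
      · exact h5 a ha b hb
  have := K.conn5 _ _ _ hs hA (hB.trans (Finset.card_le_card (Finset.subset_insert _ _)))
  rw [Finset.card_erase_of_mem hv] at this
  omega

lemma Ctx.exists_good (K : Ctx G x) {a : V} (ha : G.Adj x a) :
    ∃ C S D, Good G x C S D ∧ a ∈ S := by
  obtain ⟨C, S, D, h, hc, hC, hD, hx, haS⟩ :=
    K.contr x a ha (fun w h1 h2 => absurd h2 (K.ind a w ha h1))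
  exact ⟨C, S, D, ⟨h, hc, hC, hD, hx, a, haS, ha⟩, haS⟩

/-! ### Minimal good sides have two vertices -/

/-- A good side which is minimal under inclusion has exactly two vertices, by counting in the four
corners it forms with a good separation through an edge from `x` into that side. -/
lemma Ctx.cross (K : Ctx G x) {A T B : Finset V} (h : Good G x A T B)
    (hmin : ∀ A' T' B', Good G x A' T' B' → A' ⊆ A → A' = A) {a : V} (ha : a ∈ A)
    (hxa : G.Adj x a) {C S D : Finset V} (k : Good G x C S D) (haS : a ∈ S) :
    A.card = 2 ∧ A ⊆ S ∧ (T ∩ S).card = 1 ∧ (T ∩ C).card = 2 ∧ (T ∩ D).card = 2 := by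
  have corner : ∀ {C S D : Finset V}, Good G x C S D → a ∈ S →
      (A ∩ C).card = 0 ∨ 6 ≤ (T ∩ C).card + (T ∩ S).card + (A ∩ S).card := by
    intro C S D k haS
    by_contra! hcon
    have hne : (A ∩ C).Nonempty := Finset.card_pos.1 (by omega)
    have q := h.sep.quad k.sep
    have qc := h.sep.card_quad k.sep
    have hxQ : x ∈ T ∩ C ∪ T ∩ S ∪ A ∩ S := by simp [h.xT, k.xT]
    have haQ : a ∈ T ∩ C ∪ T ∩ S ∪ A ∩ S := by simp [ha, haS]
    have hBD : 2 ≤ (B ∪ D).card := h.cB.trans (Finset.card_le_card Finset.subset_union_left)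
    have h5 := K.five q hne hBD (fun hx => q.notAT _ hx hxQ) ⟨x, hxQ, .inl rfl⟩
    have g : Good G x _ _ _ := ⟨q, by omega, K.two_le q hne (by omega) hxQ ⟨a, haQ, hxa⟩, hBD,
      hxQ, a, haQ, hxa⟩
    have := hmin _ _ _ g Finset.inter_subset_left
    rw [← this] at ha
    exact k.sep.notAT a (Finset.mem_inter.1 ha).2 haS
  have cornerB : ∀ {C S D : Finset V}, Good G x C S D →
      (B ∩ C).card = 0 ∨ 5 ≤ (T ∩ C).card + (T ∩ S).card + (B ∩ S).card := by
    intro C S D k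
    by_contra! hcon
    have hne : (B ∩ C).Nonempty := Finset.card_pos.1 (by omega)
    have q := h.symm.sep.quad k.sep
    have qc := h.symm.sep.card_quad k.sep
    have hxQ : x ∈ T ∩ C ∪ T ∩ S ∪ B ∩ S := by simp [h.xT, k.xT]
    have hBD : 2 ≤ (A ∪ D).card := h.cA.trans (Finset.card_le_card Finset.subset_union_left)
    have h5 := K.five q hne hBD (fun hx => q.notAT _ hx hxQ) ⟨x, hxQ, .inl rfl⟩
    omega
  have e1 := corner k haS
  have e2 := corner k.symm haS
  have e3 := cornerB k
  have e4 := cornerB k.symm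
  have f1 := k.sep.card_inter A
  have f2 := k.sep.card_inter B
  have f3 := k.sep.card_inter T
  have f4 := h.sep.card_inter C
  have f5 := h.sep.card_inter D
  have f6 := h.sep.card_inter S
  rw [Finset.inter_comm C, Finset.inter_comm C, Finset.inter_comm C] at f4
  rw [Finset.inter_comm D, Finset.inter_comm D, Finset.inter_comm D] at f5
  rw [Finset.inter_comm S, Finset.inter_comm S, Finset.inter_comm S] at f6
  have g1 : 0 < (T ∩ S).card := Finset.card_pos.2 ⟨x, by simp [h.xT, k.xT]⟩
  have g2 : 0 < (A ∩ S).card := Finset.card_pos.2 ⟨a, by simp [ha, haS]⟩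
  have := h.cA; have := h.cB; have := k.cA; have := k.cB
  have := h.cT; have := k.cT
  have key : A.card = 2 ∧ (A ∩ S).card = 2 ∧ (T ∩ S).card = 1 ∧ (T ∩ C).card = 2 ∧
      (T ∩ D).card = 2 := by omega
  obtain ⟨k1, k2, k3⟩ := key
  refine ⟨k1, ?_, k3⟩
  rw [← Finset.inter_eq_left]
  exact Finset.eq_of_subset_of_card_le Finset.inter_subset_left (by omega)

lemma Ctx.exists_two (K : Ctx G x) {A T B : Finset V} (h : Good G x A T B) :
    ∃ A' T' B', Good G x A' T' B' ∧ A' ⊆ A ∧ A'.card = 2 := by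
  induction A using Finset.strongInduction generalizing T B with
  | H A ih =>
    by_cases hmin : ∀ A' T' B', Good G x A' T' B' → A' ⊆ A → A' = A
    · obtain ⟨a, ha, hxa⟩ := K.nbr_left h.sep h.cT h.cA h.cB h.xT
      obtain ⟨C, S, D, k, haS⟩ := K.exists_good hxa
      exact ⟨A, T, B, h, subset_rfl, (K.cross h hmin ha hxa k haS).1⟩
    · push Not at hmin
      obtain ⟨A', T', B', g, hs, hne⟩ := hmin
      obtain ⟨A2, T2, B2, g2, hs2, hc⟩ := ih A' (Finset.ssubset_iff_subset_ne.2 ⟨hs, hne⟩) g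
      exact ⟨A2, T2, B2, g2, hs2.trans hs, hc⟩

/-- A good side with two vertices is a two-side: the vertices `a` and `w` have at most five possible
neighbours each, and both have degree at least 5. -/
lemma Ctx.twoSide (K : Ctx G x) {a w : V} {T B : Finset V} (h : Good G x {a, w} T B)
    (haw : a ≠ w) (hxa : G.Adj x a) : ∃ y, TwoSide G x a w y T := by
  obtain ⟨y, hyT, hxy⟩ := h.ex
  have aT : a ∉ T := h.sep.notAT a (by simp)
  have wT : w ∉ T := h.sep.notAT w (by simp)
  have nbs : ∀ u ∈ ({a, w} : Finset V), ∀ v, G.Adj u v → v = a ∨ v = w ∨ v ∈ T := by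
    intro u hu v huv
    rcases h.sep.cover v with h1 | h1 | h1
    · simp only [Finset.mem_insert, Finset.mem_singleton] at h1; tauto
    · tauto
    · exact absurd huv (h.sep.noedge u hu v h1)
  have Na : nb G a = insert w (T.erase y) := by
    apply Finset.eq_of_subset_of_card_le
    · intro v hv
      rw [mem_nb] at hv
      have h1 := nbs a (by simp) v hv
      have h2 : v ≠ a := hv.ne'
      have h3 : v ≠ y := by rintro rfl; exact K.ind a v hxa hxy hv
      simp only [Finset.mem_insert, Finset.mem_erase]; tauto
    · rw [Finset.card_insert_of_notMem (by simp [wT]), Finset.card_erase_of_mem hyT, h.cT]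
      exact K.near a hxa.ne' (.inl hxa)
  have Na' : ∀ v, G.Adj a v ↔ v = w ∨ (v ∈ T ∧ v ≠ y) := by
    intro v
    rw [← mem_nb, Na]
    simp only [Finset.mem_insert, Finset.mem_erase]; tauto
  have aw : G.Adj a w := (Na' w).2 (.inl rfl)
  have Nw : nb G w = insert a (T.erase x) := by
    apply Finset.eq_of_subset_of_card_le
    · intro v hv
      rw [mem_nb] at hv
      have h1 := nbs w (by simp) v hv
      have h2 : v ≠ w := hv.ne'
      have h3 : v ≠ x := by rintro rfl; exact K.ind a w hxa hv.symm aw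
      simp only [Finset.mem_insert, Finset.mem_erase]; tauto
    · rw [Finset.card_insert_of_notMem (by simp [aT]), Finset.card_erase_of_mem h.xT, h.cT]
      exact K.near w (by rintro rfl; exact wT h.xT) (.inr ⟨a, hxa, aw⟩)
  refine ⟨y, hxa, hxy, h.xT, hyT, aT, wT, haw, h.cT, Na', fun v => ?_⟩
  rw [← mem_nb, Nw]
  simp only [Finset.mem_insert, Finset.mem_erase]; tauto

lemma Ctx.exists_twoSide (K : Ctx G x) {C S D : Finset V} (h : Good G x C S D) :
    ∃ a w y T, TwoSide G x a w y T ∧ a ∈ C ∧ w ∈ C := by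
  obtain ⟨A, T, B, g, hs, hc⟩ := K.exists_two h
  obtain ⟨p, q, hpq, rfl⟩ := Finset.card_eq_two.1 hc
  obtain ⟨a, ha, hxa⟩ := K.nbr_left g.sep g.cT g.cA g.cB g.xT
  simp only [Finset.mem_insert, Finset.mem_singleton] at ha
  rcases ha with rfl | rfl
  · obtain ⟨y, hy⟩ := K.twoSide g hpq hxa
    exact ⟨a, q, y, T, hy, hs (by simp), hs (by simp)⟩
  · rw [Finset.pair_comm] at g
    obtain ⟨y, hy⟩ := K.twoSide g hpq.symm hxa
    exact ⟨a, p, y, T, hy, hs (by simp), hs (by simp)⟩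

lemma TwoSide.good (K : Ctx G x) {a w y : V} {T : Finset V} (t : TwoSide G x a w y T) :
    Good G x {a, w} T ({a, w} ∪ T)ᶜ := by
  have hs : Sep G {a, w} T ({a, w} ∪ T)ᶜ := by
    apply Sep.of_closed
    · intro v hv
      simp only [Finset.mem_insert, Finset.mem_singleton] at hv
      rcases hv with rfl | rfl
      exacts [t.aT, t.wT]
    · intro u hu v huv
      simp only [Finset.mem_insert, Finset.mem_singleton] at hu ⊢
      rcases hu with rfl | rfl
      · have := (t.Na v).1 huv; tauto
      · have := (t.Nw v).1 huv; tauto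
  have hc := Finset.card_pair t.aw
  refine ⟨hs, t.cT, hc.ge, ?_, t.xT, y, t.yT, t.xy⟩
  rw [Finset.card_compl]
  have := Finset.card_union_le {a, w} T
  have := K.card
  have := t.cT
  omega

/-- A separator through the edge `xa`, where `{a, w}` is a two-side, meets the separator of that
two-side only in `x`. -/
lemma TwoSide.cross (K : Ctx G x) {a w y : V} {T : Finset V} (t : TwoSide G x a w y T)
    {C S D : Finset V} (k : Good G x C S D) (haS : a ∈ S) :
    ∀ v, v ∈ S → v ∈ T → v = x := by
  have h := t.good K
  have hc := Finset.card_pair t.aw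
  have hcr := K.cross h (fun A' T' B' g hs => Finset.eq_of_subset_of_card_le hs (by
    rw [hc]; exact g.cA)) (a := a) (by simp) t.xa k haS
  intro v hv hvT
  exact Finset.card_le_one.1 hcr.2.2.1.le v (by simp [hv, hvT]) x (by simp [t.xT, k.xT])

/-! ### Linked two-sides -/

/-- Two two-sides sharing the vertex `w`: then `{a, w, y}` is cut off by `T \ {y}`. -/
lemma TwoSide.false_of_shared (K : Ctx G x) {a w y y₁ : V} {T T₁ : Finset V}
    (t : TwoSide G x a w y T) (t₁ : TwoSide G x y w y₁ T₁) : False := by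
  have wa : G.Adj w a := (t.Nw a).2 (.inl rfl)
  have ay : a ≠ y := by rintro rfl; exact t.aT t.yT
  have yw : y ≠ w := t₁.aw
  have hay : ¬ G.Adj y a := K.ind y a t.xy t.xa
  have haT₁ : a ∈ T₁ := by
    rcases (t₁.Nw a).1 wa with h | h
    exacts [absurd h ay, h.1]
  have hy₁ : a = y₁ := by
    by_contra hne
    exact hay ((t₁.Na a).2 (.inr ⟨haT₁, hne⟩))
  subst hy₁
  have hs : Sep G {a, w, y} (T.erase y) ({a, w, y} ∪ T.erase y)ᶜ := by
    apply Sep.of_closed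
    · intro v hv
      simp only [Finset.mem_insert, Finset.mem_singleton] at hv
      rcases hv with rfl | rfl | rfl
      · simp [t.aT]
      · simp [t.wT]
      · simp
    · intro u hu v huv
      simp only [Finset.mem_insert, Finset.mem_singleton, Finset.mem_erase] at hu ⊢
      rcases hu with rfl | rfl | rfl
      · have := (t.Na v).1 huv; tauto
      · have := (t.Nw v).1 huv; tauto
      · have hvu : v ≠ u := huv.ne'
        rcases (t₁.Na v).1 huv with h | ⟨h, h'⟩
        · tauto
        · by_cases hvx : v = x
          · subst hvx
            exact .inr ⟨hvu, t.xT⟩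
          · have := (t.Nw v).1 ((t₁.Nw v).2 (.inr ⟨h, hvx⟩))
            tauto
  have hc : ({a, w, y} : Finset V).card = 3 := Finset.card_eq_three.2 ⟨a, w, y, t.aw, ay, yw.symm, rfl⟩
  have he := Finset.card_erase_of_mem t.yT
  have hT := t.cT
  have h5 := K.conn5 _ _ _ hs (by omega) (by
    rw [Finset.card_compl]
    have := Finset.card_union_le {a, w, y} (T.erase y)
    have := K.card
    omega)
  omega

/-- For linked two-sides `{a, w}` and `{y, t}`, a separator through the edge `wt` must contain `x`:
otherwise it contains `a` and `y` too, and trading `a`, `w` for a single vertex of `T` leaves a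
separator of order 4. -/
lemma TwoSide.false_of_x_left (K : Ctx G x) {a w y t : V} {T T₁ : Finset V}
    (h : TwoSide G x a w y T) (h₁ : TwoSide G x y t a T₁) (htT : t ∈ T)
    {C S D : Finset V} (k : Sep G C S D)
    (cS : S.card = 5) (cC : 2 ≤ C.card) (cD : 2 ≤ D.card) (hw : w ∈ S) (ht : t ∈ S)
    (hx : x ∈ C) : False := by
  have notD : ∀ v, G.Adj x v → v ∉ D := fun v hv hD => k.noedge x hx v hD hv
  have haS : a ∈ S := by
    rcases k.cover a with haC | haS | haD
    · obtain ⟨v, hv, hwv⟩ := K.nbr_left k.symm cS cD cC hw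
      rcases (h.Nw v).1 hwv with rfl | ⟨h2, h3⟩
      · exact absurd hv (k.notAB _ haC)
      · by_cases hvy : v = y
        · subst hvy; exact absurd hv (notD _ h.xy)
        · exact absurd ((h.Na v).2 (.inr ⟨h2, hvy⟩)) (k.noedge a haC v hv)
    · exact haS
    · exact absurd haD (notD a h.xa)
  have hyS : y ∈ S := by
    rcases k.cover y with hyC | hyS | hyD
    · obtain ⟨v, hv, htv⟩ := K.nbr_left k.symm cS cD cC ht
      rcases (h₁.Nw v).1 htv with rfl | ⟨h2, h3⟩
      · exact absurd hv (k.notAB _ hyC)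
      · by_cases hva : v = a
        · subst hva; exact absurd hv (notD _ h.xa)
        · exact absurd ((h₁.Na v).2 (.inr ⟨h2, hva⟩)) (k.noedge y hyC v hv)
    · exact hyS
    · exact absurd hyD (notD y h.xy)
  have inT : ∀ v, v ∉ S → G.Adj w v → v ∈ T := by
    intro v hv hwv
    rcases (h.Nw v).1 hwv with rfl | h2
    exacts [absurd haS hv, h2.1]
  obtain ⟨u, hu, hwu⟩ := K.nbr_left k cS cC cD hw
  obtain ⟨v, hv, hwv⟩ := K.nbr_left k.symm cS cD cC hw
  have huS : u ∉ S := k.notAT u hu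
  have hvS : v ∉ S := fun h => k.notTB v h hv
  have huT := inT u huS hwu
  have hvT := inT v hvS hwv
  have hxS : x ∉ S := k.notAT x hx
  have hux : u ≠ x := by rintro rfl; have := (h.Nw u).1 hwu; have := h.xa.ne; tauto
  have huv : u ≠ v := by rintro rfl; exact k.notAB _ hu hv
  have hvx : v ≠ x := by rintro rfl; exact k.notAB _ hx hv
  have hTeq : ({x, y, t, u, v} : Finset V) = T := by
    apply Finset.eq_of_subset_of_card_le
    · intro z hz
      simp only [Finset.mem_insert, Finset.mem_singleton] at hz
      rcases hz with rfl | rfl | rfl | rfl | rfl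
      exacts [h.xT, h.yT, htT, huT, hvT]
    · rw [h.cT]
      have e1 : y ≠ t := h₁.aw
      have e2 : ∀ p ∈ S, ∀ q, q ∉ S → p ≠ q := by rintro p hp q hq rfl; exact hq hp
      rw [Finset.card_insert_of_notMem, Finset.card_insert_of_notMem,
        Finset.card_insert_of_notMem, Finset.card_insert_of_notMem, Finset.card_singleton]
      · simpa using huv
      · have := e2 t ht u huS; have := e2 t ht v hvS
        simp only [Finset.mem_insert, Finset.mem_singleton]; tauto
      · have := e2 y hyS u huS; have := e2 y hyS v hvS
        simp only [Finset.mem_insert, Finset.mem_singleton]; tauto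
      · have := e2 y hyS x hxS; have := e2 t ht x hxS
        simp only [Finset.mem_insert, Finset.mem_singleton]; tauto
  have onlyv : ∀ z ∈ D, z ∈ T → z = v := by
    intro z hz hzT
    rw [← hTeq] at hzT
    simp only [Finset.mem_insert, Finset.mem_singleton] at hzT
    rcases hzT with rfl | rfl | rfl | rfl | rfl
    · exact absurd hz (k.notAB _ hx)
    · exact absurd hz (k.notTB _ hyS)
    · exact absurd hz (k.notTB _ ht)
    · exact absurd hz (k.notAB _ hu)
    · rfl
  have hs : Sep G (D.erase v) (insert v ((S.erase a).erase w))
      (D.erase v ∪ insert v ((S.erase a).erase w))ᶜ := by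
    apply Sep.of_closed
    · intro z hz
      have := k.notTB z
      simp only [Finset.mem_insert, Finset.mem_erase] at hz ⊢
      tauto
    · intro z hz q hzq
      simp only [Finset.mem_insert, Finset.mem_erase] at hz ⊢
      rcases k.cover q with hq | hq | hq
      · exact absurd hzq.symm (k.noedge q hq z hz.2)
      · by_cases hqa : q = a
        · subst hqa
          rcases (h.Na z).1 hzq.symm with rfl | h2
          · exact absurd hz.2 (k.notTB _ hw)
          · exact absurd (onlyv z hz.2 h2.1) hz.1
        by_cases hqw : q = w
        · subst hqw
          exact absurd (onlyv z hz.2 (inT z (fun h => k.notTB z h hz.2) hzq.symm)) hz.1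
        tauto
      · tauto
  have hcard : (insert v ((S.erase a).erase w)).card = 4 := by
    rw [Finset.card_insert_of_notMem (by simp [hvS]), Finset.card_erase_of_mem
      (Finset.mem_erase.2 ⟨h.aw.symm, hw⟩), Finset.card_erase_of_mem haS, cS]
  have h5 := K.five hs (Finset.card_pos.1 (by rw [Finset.card_erase_of_mem hv]; omega)) ?_
    (fun hxD => k.notAB x hx (Finset.mem_erase.1 hxD).2)
    ⟨y, by
      have e1 : y ≠ a := by rintro rfl; exact h.aT h.yT
      have e2 : y ≠ w := by rintro rfl; exact h.wT h.yT
      simp [e1, e2, hyS], .inr h.xy⟩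
  · omega
  · refine cC.trans (Finset.card_le_card fun z hz => ?_)
    have := k.notAT z hz
    have := k.notAB z hz
    have : z ≠ v := by rintro rfl; tauto
    simp only [Finset.mem_compl, Finset.mem_union, Finset.mem_insert, Finset.mem_erase]
    tauto

/-- Moving a vertex `y` of `D` into the separator in exchange for `w`, when `y` is the only neighbour
of `w` in `D`. -/
lemma Sep.shift {C S D : Finset V} (k : Sep G C S D) {w y : V} (hw : w ∈ S) (hy : y ∈ D)
    (only : ∀ v ∈ D, G.Adj w v → v = y) :
    Sep G (insert w C) (insert y (S.erase w)) (D.erase y) := by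
  obtain ⟨h1, h2, h3, h4, h5⟩ := k
  refine ⟨fun v => ?_, fun v => ?_, fun v => ?_, fun v => ?_, fun p hp q hq => ?_⟩
  · have := h1 v
    simp only [Finset.mem_insert, Finset.mem_erase]; tauto
  · simp only [Finset.mem_insert, Finset.mem_erase]
    rintro (rfl | hv)
    · rintro (rfl | h)
      · exact h4 _ hw hy
      · exact h.1 rfl
    · rintro (rfl | h)
      · exact h3 _ hv hy
      · exact h2 _ hv h.2
  · simp only [Finset.mem_insert, Finset.mem_erase]
    rintro (rfl | hv)
    · exact fun h => h4 _ hw h.2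
    · exact fun h => h3 _ hv h.2
  · simp only [Finset.mem_insert, Finset.mem_erase]
    rintro (rfl | hv)
    · exact fun h => h.1 rfl
    · exact fun h => h4 _ hv.2 h.2
  · rw [Finset.mem_insert] at hp
    rw [Finset.mem_erase] at hq
    rcases hp with rfl | hp
    · exact fun h => hq.1 (only q hq.2 h)
    · exact h5 p hp q hq.2

/-- After a shift that brings a neighbour `y` of `x` into the separator, the side that lost `y` is
a side of a good separation. -/
lemma Ctx.shift_good (K : Ctx G x) {C S D : Finset V} (k : Sep G C S D) {w y : V} (hw : w ∈ S)
    (hy : y ∈ D) (only : ∀ v ∈ D, G.Adj w v → v = y) (hx : x ∈ S) (hxw : x ≠ w) (hxy : G.Adj x y)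
    (cS : S.card = 5) (cC : 2 ≤ C.card) (cD : 2 ≤ D.card) :
    Good G x (D.erase y) (insert y (S.erase w)) (insert w C) := by
  have hs := k.shift hw hy only
  have hc : (insert y (S.erase w)).card = 5 := by
    rw [Finset.card_insert_of_notMem, Finset.card_erase_of_mem hw, cS]
    exact fun h => k.notTB y (Finset.mem_erase.1 h).2 hy
  have hxQ : x ∈ insert y (S.erase w) := by simp [hx, hxw]
  have hyQ : y ∈ insert y (S.erase w) := by simp
  refine ⟨hs.symm, hc, K.two_le hs.symm ?_ hc hxQ ⟨y, hyQ, hxy⟩,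
    cC.trans (Finset.card_le_card (Finset.subset_insert _ _)), hxQ, y, hyQ, hxy⟩
  exact Finset.card_pos.1 (by rw [Finset.card_erase_of_mem hy]; omega)

/-- The four neighbours of `x`, once four distinct ones are known. -/
lemma Ctx.nbrs (K : Ctx G x) {a b c d v : V} (ha : G.Adj x a) (hb : G.Adj x b) (hc : G.Adj x c)
    (hd : G.Adj x d) (ab : a ≠ b) (ac : a ≠ c) (ad : a ≠ d) (bc : b ≠ c) (bd : b ≠ d) (cd : c ≠ d)
    (hv : G.Adj x v) : v = a ∨ v = b ∨ v = c ∨ v = d := by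
  have : ({a, b, c, d} : Finset V) = nb G x := by
    apply Finset.eq_of_subset_of_card_le
    · intro z hz
      simp only [Finset.mem_insert, Finset.mem_singleton] at hz
      rw [mem_nb]
      rcases hz with rfl | rfl | rfl | rfl <;> assumption
    · rw [K.degx, Finset.card_insert_of_notMem, Finset.card_insert_of_notMem,
        Finset.card_pair cd]
      · simp [bc, bd]
      · simp [ab, ac, ad]
  have hvn := mem_nb.2 hv
  rw [← this] at hvn
  simpa using hvn

/-- The separator through `wt` contains `x` and separates `a` from `y`. Shifting it to either side
produces two-sides at the two remaining neighbours of `x`; the one next to `a` has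
nowhere to attach. -/
lemma TwoSide.false_of_a_left (K : Ctx G x) {a w y t : V} {T T₁ : Finset V}
    (h : TwoSide G x a w y T) (h₁ : TwoSide G x y t a T₁) {C S D : Finset V} (k : Sep G C S D)
    (cS : S.card = 5) (cC : 2 ≤ C.card) (cD : 2 ≤ D.card) (hw : w ∈ S) (ht : t ∈ S)
    (hx : x ∈ S) (ha : a ∈ C) : False := by
  have only₁ : ∀ v ∈ D, G.Adj w v → v = y := by
    intro v hv hwv
    rcases (h.Nw v).1 hwv with rfl | h2
    · exact absurd hv (k.notAB _ ha)
    · by_contra hvy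
      exact k.noedge a ha v hv ((h.Na v).2 (.inr ⟨h2.1, hvy⟩))
  have hyD : y ∈ D := by
    obtain ⟨v, hv, hwv⟩ := K.nbr_left k.symm cS cD cC hw
    rwa [← only₁ v hv hwv]
  have only₂ : ∀ v ∈ C, G.Adj t v → v = a := by
    intro v hv htv
    rcases (h₁.Nw v).1 htv with rfl | h2
    · exact absurd hyD (k.notAB _ hv)
    · by_contra hva
      exact k.noedge v hv y hyD ((h₁.Na v).2 (.inr ⟨h2.1, hva⟩)).symm
  have hxw : x ≠ w := by rintro rfl; exact h.wT h.xT
  have hxt : x ≠ t := by rintro rfl; exact h₁.wT h₁.xT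
  obtain ⟨b', _, _, _, g', hb', -⟩ :=
    K.exists_twoSide (K.shift_good k hw hyD only₁ hx hxw h.xy cS cC cD)
  obtain ⟨b, w₂, y₂, T₂, g, hb, hw₂⟩ :=
    K.exists_twoSide (K.shift_good k.symm ht ha only₂ hx hxt h.xa cS cD cC)
  rw [Finset.mem_erase] at hb' hb hw₂
  have w₂y₂ : G.Adj w₂ y₂ := (g.Nw y₂).2 (.inr ⟨g.yT, g.xy.ne'⟩)
  have hy₂D : y₂ ∉ D := fun hD => k.noedge _ hw₂.2 _ hD w₂y₂
  have ne : ∀ p ∈ C, ∀ q ∈ D, p ≠ q := by rintro p hp q hq rfl; exact k.notAB _ hp hq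
  have hy₂ : y₂ = a := by
    rcases K.nbrs h.xa h.xy g'.xa g.xa (ne _ ha _ hyD) (ne _ ha _ hb'.2) hb.1.symm
      hb'.1.symm (ne _ hb.2 _ hyD).symm (ne _ hb.2 _ hb'.2).symm g.xy with rfl | rfl | rfl | rfl
    · rfl
    · exact absurd hyD hy₂D
    · exact absurd hb'.2 hy₂D
    · exact absurd g.yT g.aT
  subst hy₂
  have hbS : b ∉ S := k.notAT b hb.2
  have hw₂T : w₂ ∈ T := by
    rcases (h.Na w₂).1 w₂y₂.symm with rfl | h2
    · exact absurd hw (k.notAT _ hw₂.2)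
    · exact h2.1
  have hw₂x : w₂ ≠ x := by rintro rfl; exact k.notAT _ hw₂.2 hx
  have hww₂ : G.Adj w w₂ := (h.Nw w₂).2 (.inr ⟨hw₂T, hw₂x⟩)
  have hwT₂ : w ∈ T₂ := by
    rcases (g.Nw w).1 hww₂.symm with rfl | h2
    · exact absurd hw hbS
    · exact h2.1
  have hbw : G.Adj b w := (g.Na w).2 (.inr ⟨hwT₂, h.aw.symm⟩)
  have hby : b ≠ y := ne _ hb.2 _ hyD
  rcases (h.Nw b).1 hbw.symm with rfl | h2
  · exact hb.1 rfl
  · exact K.ind _ _ h.xa g.xa ((h.Na b).2 (.inr ⟨h2.1, hby⟩))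

/-- If `{a, w}` is a two-side and `y` is the neighbour of `x` in its separator, then `y` itself
belongs to no two-side. -/
lemma TwoSide.false_of_chain (K : Ctx G x) {a w y t y₁ : V} {T T₁ : Finset V}
    (h : TwoSide G x a w y T) (h₁ : TwoSide G x y t y₁ T₁) : False := by
  have wa : G.Adj w a := (h.Nw a).2 (.inl rfl)
  have wy : G.Adj w y := (h.Nw y).2 (.inr ⟨h.yT, h.xy.ne'⟩)
  have hay : ¬ G.Adj a y := K.ind a y h.xa h.xy
  have hwx : w ≠ x := by rintro rfl; exact h.wT h.xT
  have hneay : a ≠ y := by rintro rfl; exact h.aT h.yT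
  rcases (h₁.Na w).1 wy.symm with rfl | ⟨hwT₁, hwy₁⟩
  · exact h.false_of_shared K h₁
  have tw : G.Adj t w := (h₁.Nw w).2 (.inr ⟨hwT₁, hwx⟩)
  have yt : G.Adj y t := (h₁.Na t).2 (.inl rfl)
  have htT : t ∈ T := by
    rcases (h.Nw t).1 tw.symm with rfl | h2
    · exact absurd yt.symm hay
    · exact h2.1
  have ta : G.Adj t a := ((h.Na t).2 (.inr ⟨htT, h₁.aw.symm⟩)).symm
  have haT₁ : a ∈ T₁ := by
    rcases (h₁.Nw a).1 ta with h2 | h2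
    exacts [absurd h2 hneay, h2.1]
  have hy₁ : a = y₁ := by
    by_contra hne
    exact hay ((h₁.Na a).2 (.inr ⟨haT₁, hne⟩)).symm
  subst hy₁
  obtain ⟨C, S, D, k, cS, cC, cD, hw, ht⟩ := K.contr w t tw.symm (by
    intro v hwv htv
    rcases (h.Nw v).1 hwv with rfl | h2
    · exact K.near _ h.xa.ne' (.inl h.xa)
    · by_cases hvy : v = y
      · subst hvy; exact K.near _ h.xy.ne' (.inl h.xy)
      · exact K.near _ h2.2 (.inr ⟨a, h.xa, (h.Na v).2 (.inr ⟨h2.1, hvy⟩)⟩))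
  have htx : t ≠ x := by rintro rfl; exact h₁.wT h₁.xT
  rcases k.cover x with hx | hx | hx
  · exact h.false_of_x_left K h₁ htT k cS cC cD hw ht hx
  · rcases k.cover a with ha | ha | ha
    · exact h.false_of_a_left K h₁ k cS cC cD hw ht hx ha
    · exact htx (h.cross K ⟨k, cS, cC, cD, hx, a, ha, h.xa⟩ ha t ht htT)
    · exact h.false_of_a_left K h₁ k.symm cS cD cC hw ht hx ha
  · exact h.false_of_x_left K h₁ htT k.symm cS cD cC hw ht hx

/-- Both sides of a separation through `xa` contain a two-side. This places three of the four
neighbours of `x` in two-sides, and forces all of these to be linked to the fourth, `y`, which then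
has no place. -/
lemma Ctx.false (K : Ctx G x) : False := by
  obtain ⟨a₀, ha₀⟩ := Finset.card_pos.1 (show 0 < (nb G x).card by rw [K.degx]; omega)
  obtain ⟨_, _, _, g, -⟩ := K.exists_good (mem_nb.1 ha₀)
  obtain ⟨a, w, y, T, h, -, -⟩ := K.exists_twoSide g
  obtain ⟨C, S, D, k, haS⟩ := K.exists_good h.xa
  obtain ⟨c, w₁, y₁, T₁, h₁, hc, hw₁⟩ := K.exists_twoSide k
  obtain ⟨d, w₂, y₂, T₂, h₂, hd, hw₂⟩ := K.exists_twoSide k.symm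
  have ac : a ≠ c := by rintro rfl; exact k.sep.notAT _ hc haS
  have ad : a ≠ d := by rintro rfl; exact k.sep.notTB _ haS hd
  have cd : c ≠ d := by rintro rfl; exact k.sep.notAB _ hc hd
  have ay : a ≠ y := by rintro rfl; exact h.aT h.yT
  have yc : y ≠ c := by rintro rfl; exact h.false_of_chain K h₁
  have yd : y ≠ d := by rintro rfl; exact h.false_of_chain K h₂
  have all := fun {v} => K.nbrs (v := v) h.xa h.xy h₁.xa h₂.xa ay ac ad yc yd cd
  have e₁ : y₁ = y := by
    rcases all h₁.xy with rfl | rfl | rfl | rfl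
    · exact (h₁.false_of_chain K h).elim
    · rfl
    · exact absurd h₁.yT h₁.aT
    · exact (h₁.false_of_chain K h₂).elim
  have e₂ : y₂ = y := by
    rcases all h₂.xy with rfl | rfl | rfl | rfl
    · exact (h₂.false_of_chain K h).elim
    · rfl
    · exact (h₂.false_of_chain K h₁).elim
    · exact absurd h₂.yT h₂.aT
  subst e₁
  have a₁ : G.Adj w₁ y₁ := (h₁.Nw y₁).2 (.inr ⟨h₁.yT, h₁.xy.ne'⟩)
  have a₂ : G.Adj w₂ y₁ := (h₂.Nw y₁).2 (.inr ⟨e₂ ▸ h₂.yT, h₁.xy.ne'⟩)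
  rcases k.sep.cover y₁ with hy | hy | hy
  · exact k.sep.noedge _ hy _ hw₂ a₂.symm
  · exact h.xy.ne' (h.cross K k haS y₁ hy h.yT)
  · exact k.sep.noedge _ hw₁ _ hy a₁

end

/-! ### Connectivity and contraction in terms of separations -/

lemma Sep.not_connected {G : SimpleGraph V} {A T B : Finset V} (h : Sep G A T B)
    (hA : A.Nonempty) (hB : B.Nonempty) : ¬ (G.induce (T : Set V)ᶜ).Connected := by
  intro hc
  obtain ⟨a, ha⟩ := hA
  obtain ⟨b, hb⟩ := hB
  have hr := hc.preconnected ⟨a, by simpa using h.notAT a ha⟩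
    ⟨b, by simpa using fun hT => h.notTB b hT hb⟩
  rw [SimpleGraph.reachable_iff_reflTransGen] at hr
  have : ∀ z : ((T : Set V)ᶜ : Set V), Relation.ReflTransGen (G.induce (T : Set V)ᶜ).Adj
      ⟨a, by simpa using h.notAT a ha⟩ z → z.1 ∈ A := by
    intro z hz
    induction hz with
    | refl => exact ha
    | @tail p q _ hpq ih =>
      rcases h.cover q.1 with h1 | h1 | h1
      · exact h1
      · exact absurd h1 (fun h => q.2 (Finset.mem_coe.2 h))
      · exact absurd (SimpleGraph.induce_adj.1 hpq) (h.noedge _ ih _ h1)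
  exact h.notAB b (this _ hr) hb

lemma exists_sep_of_not_connected [Fintype V] {G : SimpleGraph V} {S : Finset V}
    (hne : ∃ v, v ∉ S) (h : ¬ (G.induce (S : Set V)ᶜ).Connected) :
    ∃ A B, Sep G A S B ∧ A.Nonempty ∧ B.Nonempty := by
  classical
  obtain ⟨v, hv⟩ := hne
  have : Nonempty ((S : Set V)ᶜ : Set V) := ⟨⟨v, by simpa using hv⟩⟩
  rw [SimpleGraph.connected_iff] at h
  simp only [this, and_true] at h
  unfold SimpleGraph.Preconnected at h
  push Not at h
  obtain ⟨p, q, hpq⟩ := h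
  let P : V → Prop := fun z => ∃ hz : z ∈ (S : Set V)ᶜ, (G.induce (S : Set V)ᶜ).Reachable p ⟨z, hz⟩
  refine ⟨Finset.univ.filter P, Finset.univ.filter (fun z => z ∉ S ∧ ¬ P z),
    ⟨?_, ?_, ?_, ?_, ?_⟩, ⟨p.1, ?_⟩, ⟨q.1, ?_⟩⟩
  · intro z; simp only [Finset.mem_filter, Finset.mem_univ, true_and]; tauto
  · intro z hz
    obtain ⟨hz, -⟩ := (Finset.mem_filter.1 hz).2
    simpa using hz
  · intro z; simp only [Finset.mem_filter, Finset.mem_univ, true_and]; tauto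
  · intro z; simp only [Finset.mem_filter, Finset.mem_univ, true_and]; tauto
  · intro a ha b hb hab
    simp only [Finset.mem_filter, Finset.mem_univ, true_and] at ha hb
    obtain ⟨ha, hr⟩ := ha
    have hb' : b ∈ (S : Set V)ᶜ := by simpa using hb.1
    refine hb.2 ⟨hb', hr.trans ?_⟩
    exact SimpleGraph.Adj.reachable (SimpleGraph.induce_adj.2 hab)
  · simp only [Finset.mem_filter, Finset.mem_univ, true_and]
    exact ⟨p.2, .refl _⟩
  · simp only [Finset.mem_filter, Finset.mem_univ, true_and]
    exact ⟨fun h => q.2 (Finset.mem_coe.2 h), fun ⟨_, hr⟩ => hpq hr⟩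

/-- A separation of the contraction lifts to `G`; the separator keeps its order, or contains both
ends of the contracted edge and has one more vertex. -/
lemma Sep.lift [Fintype V] [DecidableEq V] {G : SimpleGraph V} {u v : V} (huv : u ≠ v)
    {A S B : Finset {z : V // z ≠ v}} (h : Sep (contractE G u v) A S B) :
    ∃ A' T B', Sep G A' T B' ∧ A.card ≤ A'.card ∧ B.card ≤ B'.card ∧
      (T.card = S.card ∨ T.card = S.card + 1 ∧ u ∈ T ∧ v ∈ T) := by
  -- the quotient map, with the contracted vertex represented by `u`
  let φ : V → {z : V // z ≠ v} := fun z => if hz : z = v then ⟨u, huv⟩ else ⟨z, hz⟩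
  have φv : φ v = ⟨u, huv⟩ := by simp [φ]
  have φne : ∀ z (hz : z ≠ v), φ z = ⟨z, hz⟩ := fun z hz => by simp [φ, hz]
  let pre : Finset {z : V // z ≠ v} → Finset V := fun X => Finset.univ.filter (fun z => φ z ∈ X)
  have mem_pre : ∀ X z, z ∈ pre X ↔ φ z ∈ X := by simp [pre]
  have map_sub : ∀ X, X.map (Function.Embedding.subtype _) ⊆ pre X := by
    intro X z hz
    obtain ⟨y, hy, rfl⟩ := Finset.mem_map.1 hz
    rw [mem_pre]
    simpa [φne y.1 y.2] using hy
  have le : ∀ X, X.card ≤ (pre X).card := by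
    intro X
    rw [← Finset.card_map (Function.Embedding.subtype _)]
    exact Finset.card_le_card (map_sub X)
  refine ⟨pre A, pre S, pre B, ⟨?_, ?_, ?_, ?_, ?_⟩, le A, le B, ?_⟩
  · intro z; simp only [mem_pre]; exact h.cover _
  · intro z; simp only [mem_pre]; exact h.notAT _
  · intro z; simp only [mem_pre]; exact h.notAB _
  · intro z; simp only [mem_pre]; exact h.notTB _
  · intro a ha b hb hab
    rw [mem_pre] at ha hb
    refine h.noedge _ ha _ hb ?_
    have hne : φ a ≠ φ b := fun he => h.notAB _ ha (he ▸ hb)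
    rw [contractE, SimpleGraph.fromRel_adj]
    refine ⟨hne, .inl ?_⟩
    by_cases hav : a = v
    · subst hav
      have hba : b ≠ a := hab.ne'
      rw [φv, φne b hba]
      exact .inr (.inl ⟨rfl, hab⟩)
    · by_cases hbv : b = v
      · subst hbv
        rw [φv, φne a hav]
        exact .inr (.inr ⟨rfl, hab.symm⟩)
      · rw [φne a hav, φne b hbv]
        exact .inl hab
  · by_cases huS : (⟨u, huv⟩ : {z : V // z ≠ v}) ∈ S
    · right
      have : pre S = insert v (S.map (Function.Embedding.subtype _)) := by
        ext z
        by_cases hz : z = v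
        · subst hz; simp [mem_pre, φv, huS]
        · simp [mem_pre, φne z hz, hz]
      refine ⟨?_, ?_, ?_⟩
      · rw [this, Finset.card_insert_of_notMem (by simp), Finset.card_map]
      · rw [mem_pre, φne u huv]; exact huS
      · rw [mem_pre, φv]; exact huS
    · left
      have : pre S = S.map (Function.Embedding.subtype _) := by
        ext z
        by_cases hz : z = v
        · subst hz; simp [mem_pre, φv, huS]
        · simp [mem_pre, φne z hz, hz]
      rw [this, Finset.card_map]

section
variable [Fintype V] {G : SimpleGraph V}

lemma conn_of_quasi (hq : QuasiFiveConnected G) {A T B : Finset V} (h : Sep G A T B)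
    (hA : A.Nonempty) (hB : B.Nonempty) : 4 ≤ T.card := by
  by_contra hlt
  exact h.not_connected hA hB (hq.1.2 T (by rw [Set.ncard_coe_finset]; omega))

lemma conn5_of_quasi (hq : QuasiFiveConnected G) {A T B : Finset V} (h : Sep G A T B)
    (hA : 2 ≤ A.card) (hB : 2 ≤ B.card) : 5 ≤ T.card := by
  have h4 := conn_of_quasi hq h (Finset.card_pos.1 (by omega)) (Finset.card_pos.1 (by omega))
  by_contra hlt
  refine hq.2 T ⟨by rw [Set.ncard_coe_finset]; omega, A, B, ?_, ?_, ?_, ?_, ?_⟩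
  · rwa [Set.ncard_coe_finset]
  · rwa [Set.ncard_coe_finset]
  · rw [Set.disjoint_left]; exact fun v hv => h.notAB v hv
  · ext v
    have := h.cover v; have := h.notAT v; have := h.notTB v
    simp only [Set.mem_union, Set.mem_compl_iff, Finset.mem_coe]; tauto
  · exact fun a ha b hb => h.noedge a ha b hb

/-- A non-contractible edge `uv` lies in a separator of order 5 with two nontrivial
sides, unless its ends have a common neighbour of degree 4. -/
lemma contr_of_critical [DecidableEq V] (hcc : ContractionCriticalQuasiFive G)
    (hcard : 6 ≤ Fintype.card V) {u v : V} (huv : G.Adj u v)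
    (hcn : ∀ w, G.Adj u w → G.Adj v w → 5 ≤ (nb G w).card) :
    ∃ A T B, Sep G A T B ∧ T.card = 5 ∧ 2 ≤ A.card ∧ 2 ≤ B.card ∧ u ∈ T ∧ v ∈ T := by
  classical
  have hq := hcc.1
  have hnot := hcc.2 u v huv
  -- a single vertex cut off by a separator of order 4 through `u` and `v` would be
  -- a common neighbour of degree 4
  have single : ∀ A T B, Sep G A T B → B.Nonempty → T.card = 4 → u ∈ T → v ∈ T → A.card = 1 →
      False := by
    intro A T B h hB hT hu hv hA
    obtain ⟨z, hz⟩ := Finset.card_eq_one.1 hA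
    have hsub := h.nb_subset hz
    have hs : Sep G {z} (nb G z) ({z} ∪ nb G z)ᶜ := by
      apply Sep.of_closed
      · simp
      · intro a ha q hq
        simp only [Finset.mem_singleton] at ha; subst ha; simp [hq]
    have h4 := conn_of_quasi hq hs (by simp) (by
      obtain ⟨b, hb⟩ := hB
      refine ⟨b, ?_⟩
      have h1 := h.notAB b
      have h2 := h.notTB b
      rw [hz] at h1
      simp only [Finset.mem_compl, Finset.mem_union]
      exact fun h => h.elim (fun h => h1 h hb) (fun h => h2 (hsub h) hb))
    have heq := Finset.eq_of_subset_of_card_le hsub (by omega)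
    have := hcn z (by rw [← heq, mem_nb] at hu; exact hu.symm)
      (by rw [← heq, mem_nb] at hv; exact hv.symm)
    rw [heq] at this
    omega
  have hcard' : Fintype.card {z : V // z ≠ v} = Fintype.card V - 1 := by
    simp [Fintype.card_subtype_compl]
  unfold QuasiFiveConnected at hnot
  rw [not_and_or] at hnot
  rcases hnot with hnot | hnot
  · exfalso
    unfold IsKConnected at hnot
    rw [not_and_or] at hnot
    rcases hnot with hnot | hnot
    · omega
    push Not at hnot
    obtain ⟨S, hS, hc⟩ := hnot
    have hS' : S = (S.toFinset : Set _) := by simp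
    rw [hS'] at hS hc
    generalize S.toFinset = S at hS hc
    rw [Set.ncard_coe_finset] at hS
    obtain ⟨A, B, h, hA, hB⟩ := exists_sep_of_not_connected (by
      by_contra! hall
      have : S = Finset.univ := by ext z; simp [hall z]
      rw [this, Finset.card_univ] at hS
      omega) hc
    have hA' := Finset.card_pos.2 hA
    have hB' := Finset.card_pos.2 hB
    obtain ⟨A', T, B', h', cA, cB, hT⟩ := h.lift huv.ne
    have nA : A'.Nonempty := Finset.card_pos.1 (by omega)
    have nB : B'.Nonempty := Finset.card_pos.1 (by omega)
    have h4 := conn_of_quasi hq h' nA nB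
    rcases hT with hT | ⟨hT, hu, hv⟩
    · omega
    have hT4 : T.card = 4 := by omega
    by_cases h1 : A'.card = 1
    · exact single _ _ _ h' nB hT4 hu hv h1
    by_cases h2 : B'.card = 1
    · exact single _ _ _ h'.symm nA hT4 hu hv h2
    have := conn5_of_quasi hq h' (by omega) (by omega)
    omega
  · push Not at hnot
    obtain ⟨S, hS, A, B, hA, hB, hd, hcov, hno⟩ := hnot
    have h : Sep (contractE G u v) A.toFinset S.toFinset B.toFinset := by
      have hcov' : ∀ z, (z ∈ A ∨ z ∈ B) ↔ z ∉ S := fun z => by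
        rw [← Set.mem_union, hcov, Set.mem_compl_iff]
      rw [Set.disjoint_left] at hd
      refine ⟨fun z => ?_, fun z => ?_, fun z => ?_, fun z => ?_, fun a ha b hb => ?_⟩
      · have := hcov' z; simp only [Set.mem_toFinset]; tauto
      · have := hcov' z; simp only [Set.mem_toFinset]; tauto
      · have := @hd z; simp only [Set.mem_toFinset]; tauto
      · have := hcov' z; simp only [Set.mem_toFinset]; tauto
      · exact hno a (by simpa using ha) b (by simpa using hb)
    rw [Set.ncard_eq_toFinset_card'] at hS hA hB
    obtain ⟨A', T, B', h', cA, cB, hT⟩ := h.lift huv.ne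
    have h5 := conn5_of_quasi hq h' (by omega) (by omega)
    rcases hT with hT | ⟨hT, hu, hv⟩
    · omega
    exact ⟨A', T, B', h', by omega, by omega, by omega, hu, hv⟩

lemma ctx_of_critical [DecidableEq V] (hcc : ContractionCriticalQuasiFive G)
    (hdeg : DegSumNine G) {x : V} (hx : (G.neighborSet x).ncard = 4)
    (hind : ∀ a ∈ G.neighborSet x, ∀ b ∈ G.neighborSet x, ¬ G.Adj a b) : Ctx G x := by
  rw [card_nb] at hx
  have near : ∀ v, v ≠ x → (G.Adj x v ∨ ∃ y, G.Adj x y ∧ G.Adj y v) → 5 ≤ (nb G v).card := by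
    intro v hvx hv
    have hd : G.dist x v = 1 ∨ G.dist x v = 2 := by
      by_cases hadj : G.Adj x v
      · exact .inl (SimpleGraph.dist_eq_one_iff_adj.2 hadj)
      · obtain ⟨y, h1, h2⟩ := hv.resolve_left hadj
        have hle := SimpleGraph.dist_le (.cons h1 (.cons h2 .nil))
        simp only [SimpleGraph.Walk.length_cons, SimpleGraph.Walk.length_nil] at hle
        have h0 : G.dist x v ≠ 0 := by
          have hr : G.Reachable x v := h1.reachable.trans h2.reachable
          exact fun h => hvx (hr.dist_eq_zero_iff.1 h).symm
        omega
    have := hdeg x v hd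
    rw [card_nb, card_nb] at this
    omega
  have ind : ∀ a b, G.Adj x a → G.Adj x b → ¬ G.Adj a b := fun a b ha hb => hind a ha b hb
  -- a neighbour `a` of `x` has five neighbours, none of which is a neighbour of `x`
  have hcard : 9 ≤ Fintype.card V := by
    obtain ⟨a, ha⟩ := Finset.card_pos.1 (show 0 < (nb G x).card by omega)
    rw [mem_nb] at ha
    have h5 := near a ha.ne' (.inl ha)
    have hdj : Disjoint (nb G x) (nb G a) := by
      rw [Finset.disjoint_left]
      intro v h1 h2
      exact ind a v ha (mem_nb.1 h1) (mem_nb.1 h2)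
    have := Finset.card_le_univ (nb G x ∪ nb G a)
    rw [Finset.card_union_of_disjoint hdj] at this
    omega
  exact ⟨hcard, fun _ _ _ => conn_of_quasi hcc.1, fun _ _ _ => conn5_of_quasi hcc.1,
    fun _ _ => contr_of_critical hcc (by omega), ind, hx, near⟩

end

end QuasiFive

/-- A contraction critical quasi 5-connected graph with degree sum
at least 9 for all pairs at distance one or two has no degree-4 vertex whose
neighborhood is independent. -/
theorem stmt6 {V : Type*} [Fintype V] [DecidableEq V] (G : SimpleGraph V)
    (hcc : ContractionCriticalQuasiFive G) (hdeg : DegSumNine G) :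
    ¬ ∃ x : V, (G.neighborSet x).ncard = 4 ∧
        ∀ a ∈ G.neighborSet x, ∀ b ∈ G.neighborSet x, ¬ G.Adj a b := by
  rintro ⟨x, hx, hind⟩
  exact (QuasiFive.ctx_of_critical hcc hdeg hx hind).false
end
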